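/- Let 1 < c < 11/6 and let 0 < ε < 10^{-10} be a sufficiently small constant. Then Σ_{n ≤ x, n cube-free, ⌊n^c⌋ cube-free} 1 = x/ζ(3)² + O(x^{1-ε}). -/

import Mathlib

open Filter Asymptotics Finset
open scoped Classical

/-- A natural number is cube-free if no prime cube divides it. -/
def CubeFree (n : ℕ) : Prop := ∀ p : ℕ, p.Prime → ¬ p ^ 3 ∣ n

/-- `ζ(3) = ∑ 1/n³`. -/
noncomputable def zeta3 : ℝ := ∑' n : ℕ, 1 / (n : ℝ) ^ 3

/-!
Cube-freeness of `n` and of `⌊n ^ c⌋` is detected by `∑ μ(e) μ(d)` over `e ^ 3 ∣ n` and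
`d ^ 3 ∣ ⌊n ^ c⌋`, and `D ∣ ⌊t⌋` means that `t / D` has fractional part less than `1 / D`. So one
has to count small fractional parts of the convex sequences `(E * k) ^ c / D`, whose second
derivative, of size `E ^ 2 * N ^ (c - 2) / D`, is small because `c < 2`.

For `d, e ≤ z`, with `z` a small power of `N`, the sequence is followed along blocks. By Dirichlet
the slope at the start of a block is within `1 / (q * H)` of some `a / q`, `q ≤ H`, so on the next
`q` points the sequence is within `O(1 / q)` of a complete residue system and `q / D + O(1)` of them
are counted. The blocks with small `q` are rare, because the slope is strictly increasing.

For `d > z` or `e > z` an upper bound suffices, and it is trivial for `e`. Three nearby points with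
small fractional part lie just above three integer points, which are collinear because a nonzero
second difference of integers would be at least `1`. The slope is then close to a fraction whose
denominator is small and at most the gap to the next point, and there are few points near each
fraction.
-/

section Spacing

lemma card_le_one_add_div_of_gaps {T : Finset ℕ} {q : ℕ} {L : ℝ} (hq : 0 < q) (hL : 0 ≤ L)
    (hgap : ∀ s ∈ T, ∀ t ∈ T, s < t → s + q ≤ t)
    (hdiam : ∀ s ∈ T, ∀ t ∈ T, s < t → (t : ℝ) - s ≤ L) : (#T : ℝ) ≤ 1 + L / q := by
  obtain rfl | hT := T.eq_empty_or_nonempty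
  · simp only [card_empty, Nat.cast_zero]
    positivity
  set m := T.min' hT
  have hmT : m ∈ T := T.min'_mem hT
  have hinj : Set.InjOn (fun t ↦ (t - m) / q) T := by
    have hlt : ∀ s ∈ T, ∀ t ∈ T, s < t → (s - m) / q < (t - m) / q := fun s hs t ht hst ↦ by
      have hms : m ≤ s := T.min'_le s hs
      calc (s - m) / q < (s - m) / q + 1 := Nat.lt_succ_self _
        _ = (s - m + q) / q := (Nat.add_div_right _ hq).symm
        _ ≤ (t - m) / q := Nat.div_le_div_right (by have := hgap s hs t ht hst; lia)
    intro s hs t ht hst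
    rcases lt_trichotomy s t with h | h | h
    · exact absurd hst (hlt s hs t ht h).ne
    · exact h
    · exact absurd hst (hlt t ht s hs h).ne'
  have hmaps : ∀ t ∈ T, (t - m) / q ∈ range (⌊L / q⌋₊ + 1) := fun t ht ↦ by
    have hmt : m ≤ t := T.min'_le t ht
    have hle : ((t - m : ℕ) : ℝ) ≤ L := by
      rcases hmt.eq_or_lt with h | h
      · simpa [← h] using hL
      · rw [Nat.cast_sub hmt]
        exact hdiam m hmT t ht h
    rw [mem_range, Nat.lt_succ_iff, Nat.le_floor_iff (by positivity)]
    exact Nat.cast_div_le.trans (by gcongr)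
  have hcard : #T ≤ ⌊L / q⌋₊ + 1 := by
    simpa using card_le_card_of_injOn _ hmaps hinj
  calc (#T : ℝ) ≤ ⌊L / q⌋₊ + 1 := mod_cast hcard
    _ ≤ 1 + L / q := by linarith [Nat.floor_le (show 0 ≤ L / q by positivity)]

lemma card_le_one_add_div_of_ceil_gaps {T : Finset ℕ} {n : ℕ} {L : ℝ} (hL : 0 < L)
    (hT : ∀ t ∈ T, t < n) (hgap : ∀ s ∈ T, ∀ t ∈ T, s < t → s + ⌈L⌉₊ ≤ t) :
    (#T : ℝ) ≤ 1 + n / L := by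
  have hdiam : ∀ s ∈ T, ∀ t ∈ T, s < t → (t : ℝ) - s ≤ n := fun s _ t ht _ ↦ by
    have : (t : ℝ) < n := mod_cast hT t ht
    linarith [s.cast_nonneg (α := ℝ)]
  calc (#T : ℝ) ≤ 1 + n / ⌈L⌉₊ :=
        card_le_one_add_div_of_gaps (Nat.ceil_pos.2 hL) n.cast_nonneg hgap hdiam
    _ ≤ 1 + n / L := by gcongr; exact Nat.le_ceil _

/-- Second-order Taylor estimates for the sequence `f` with slopes `g` at the integers below `n`;
they stand for `f' = g` and `l₀ ≤ f'' ≤ l₁`. -/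
def QuadraticBounds (f g : ℕ → ℝ) (n : ℕ) (l₀ l₁ : ℝ) : Prop :=
  ∀ s < n, ∀ t < n, l₀ / 2 * ((t : ℝ) - s) ^ 2 ≤ f t - f s - g s * (t - s) ∧
    f t - f s - g s * (t - s) ≤ l₁ / 2 * ((t : ℝ) - s) ^ 2

variable {f g : ℕ → ℝ} {n : ℕ} {l₀ l₁ : ℝ}

lemma QuadraticBounds.mono_right (h : QuadraticBounds f g n l₀ l₁) {l₁' : ℝ} (hl : l₁ ≤ l₁') :
    QuadraticBounds f g n l₀ l₁' :=
  fun s hs t ht ↦ ⟨(h s hs t ht).1, (h s hs t ht).2.trans (by gcongr)⟩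

lemma QuadraticBounds.slope_sub_ge (h : QuadraticBounds f g n l₀ l₁) {s t : ℕ} (hst : s ≤ t)
    (ht : t < n) : l₀ * ((t : ℝ) - s) ≤ g t - g s := by
  rcases hst.eq_or_lt with rfl | hst
  · simp
  have hpos : (0 : ℝ) < t - s := sub_pos.2 (mod_cast hst)
  have hforward := (h s (hst.trans ht) t ht).1
  have hbackward := (h t ht s (hst.trans ht)).1
  refine le_of_mul_le_mul_right ?_ hpos
  nlinarith

lemma QuadraticBounds.card_slope_near_le (h : QuadraticBounds f g n l₀ l₁) (hl₀ : 0 < l₀)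
    {T : Finset ℕ} {q : ℕ} {θ ρ : ℝ} (hq : 0 < q) (hρ : 0 ≤ ρ) (hT : ∀ t ∈ T, t < n)
    (hgap : ∀ s ∈ T, ∀ t ∈ T, s < t → s + q ≤ t) (hnear : ∀ t ∈ T, |g t - θ| ≤ ρ) :
    (#T : ℝ) ≤ 1 + 2 * ρ / (l₀ * q) := by
  have hdiam : ∀ s ∈ T, ∀ t ∈ T, s < t → (t : ℝ) - s ≤ 2 * ρ / l₀ := fun s hs t ht hst ↦ by
    rw [le_div_iff₀' hl₀]
    have hsep := h.slope_sub_ge hst.le (hT t ht)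
    linarith [(abs_le.1 (hnear s hs)).1, (abs_le.1 (hnear t ht)).2]
  rw [← div_div]
  exact card_le_one_add_div_of_gaps hq (by positivity) hgap hdiam

end Spacing

section Equidistribution

lemma injOn_emod_add_mul {a : ℤ} {q : ℕ} (hcop : IsCoprime a q) (b : ℤ) :
    Set.InjOn (fun h : ℕ ↦ (b + a * h) % q) (range q) := by
  intro h hh k hk hhk
  have hdvd : (q : ℤ) ∣ a * ((k : ℤ) - h) := by
    have := Int.ModEq.dvd (show b + a * h ≡ b + a * k [ZMOD q] from hhk)
    convert this using 1
    ring
  have hmod : (h : ℤ) ≡ k [ZMOD q] := Int.modEq_iff_dvd.2 (hcop.symm.dvd_of_dvd_mul_left hdvd)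
  exact ((Int.natCast_modEq_iff.1 hmod).eq_of_lt_of_lt (mem_range.1 hh) (mem_range.1 hk))

lemma card_filter_emod_add_mul {a : ℤ} {q : ℕ} (hq : 0 < q) (hcop : IsCoprime a q) (b : ℤ)
    (p : ℤ → Prop) [DecidablePred p] :
    #{h ∈ range q | p ((b + a * ((h : ℕ) : ℤ)) % q)} = #{r ∈ Ico (0 : ℤ) q | p r} := by
  have hinj := injOn_emod_add_mul hcop b
  have himage : (range q).image (fun h : ℕ ↦ (b + a * h) % q) = Ico (0 : ℤ) q := by
    refine eq_of_subset_of_card_le (image_subset_iff.2 fun h _ ↦ mem_Ico.2 ⟨?_, ?_⟩) ?_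
    · exact Int.emod_nonneg _ (by lia)
    · exact Int.emod_lt_of_pos _ (by lia)
    · rw [card_image_of_injOn hinj]
      simp
  rw [← himage, filter_image, card_image_of_injOn (hinj.mono (filter_subset _ _))]

-- `u` differs from an integer by `(ρ + t) / q` with `-2 ≤ t < 3`, so its fractional part can fall
-- on the other side of `δ` only when `ρ` is near `0`, near `q` or near `q * δ`.
lemma fract_lt_iff_of_near_residue {q : ℕ} (hq : 0 < q) {δ u t : ℝ} {w ρ : ℤ}
    (hu : u = w + (ρ + t) / q) (ht₀ : -2 ≤ t) (ht₁ : t < 3)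
    (hlo : 2 ≤ ρ) (hhi : ρ < q - 3) (hδ : ρ ∉ Ico (⌈q * δ⌉ - 3) (⌈q * δ⌉ + 2)) :
    Int.fract u < δ ↔ ρ < ⌈q * δ⌉ := by
  have hqR : (0 : ℝ) < q := mod_cast hq
  have hloR : (2 : ℝ) ≤ ρ := mod_cast hlo
  have hhiR : (ρ : ℝ) < q - 3 := mod_cast hhi
  have hfract : Int.fract u = (ρ + t) / q := by
    refine Int.fract_eq_iff.2 ⟨by apply div_nonneg <;> linarith, ?_, w, by rw [hu]; ring⟩
    rw [div_lt_one hqR]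
    linarith
  rw [hfract, div_lt_iff₀' hqR]
  rw [mem_Ico, not_and_or, not_le, not_lt] at hδ
  rcases hδ with hδ | hδ
  · have : (ρ : ℝ) + 3 < q * δ := by simpa using Int.lt_ceil.1 (show ρ + 3 < ⌈q * δ⌉ by lia)
    exact ⟨fun _ ↦ by lia, fun _ ↦ by linarith⟩
  · have : q * δ ≤ (ρ - 2 : ℤ) := Int.ceil_le.1 (by lia)
    push_cast at this
    exact ⟨fun _ ↦ by linarith, fun _ ↦ by lia⟩

lemma abs_card_filter_sub_card_filter_le {ι : Type*} {s : Finset ι}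
    {p r e : ι → Prop} [DecidablePred p] [DecidablePred r] [DecidablePred e]
    (h : ∀ i ∈ s, ¬ e i → (p i ↔ r i)) :
    |(#{i ∈ s | p i} : ℝ) - #{i ∈ s | r i}| ≤ #{i ∈ s | e i} := by
  classical
  have hpr : {i ∈ s | p i} ⊆ {i ∈ s | r i} ∪ {i ∈ s | e i} := fun i ↦ by grind
  have hrp : {i ∈ s | r i} ⊆ {i ∈ s | p i} ∪ {i ∈ s | e i} := fun i ↦ by grind
  have hpr' : (#{i ∈ s | p i} : ℝ) ≤ #{i ∈ s | r i} + #{i ∈ s | e i} :=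
    mod_cast (card_le_card hpr).trans (card_union_le _ _)
  have hrp' : (#{i ∈ s | r i} : ℝ) ≤ #{i ∈ s | p i} + #{i ∈ s | e i} :=
    mod_cast (card_le_card hrp).trans (card_union_le _ _)
  rw [abs_le]
  constructor <;> linarith

lemma exists_eq_int_add_residue_div {q : ℕ} (hq : 0 < q) {A : ℤ} {β u : ℝ}
    (hu : |u - (β + A / q)| ≤ 2 / q) :
    ∃ w : ℤ, ∃ t : ℝ, -2 ≤ t ∧ t < 3 ∧ u = w + (((⌊q * β⌋ + A) % q : ℤ) + t) / q := by
  have hqR : (0 : ℝ) < q := mod_cast hq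
  have hdiv : ((⌊q * β⌋ + A : ℤ) : ℝ) =
      ((⌊q * β⌋ + A) % q : ℤ) + q * ((⌊q * β⌋ + A) / q : ℤ) :=
    mod_cast (Int.emod_add_mul_ediv _ _).symm
  have hu' := abs_le.1 hu
  rw [← neg_div, div_le_iff₀' hqR, le_div_iff₀' hqR] at hu'
  refine ⟨(⌊q * β⌋ + A) / q, q * (u - (β + A / q)) + Int.fract (q * β), ?_, ?_, ?_⟩
  · linarith [Int.fract_nonneg (q * β)]
  · linarith [Int.fract_lt_one (q * β)]
  · push_cast at hdiv
    rw [Int.fract]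
    field_simp
    linear_combination hdiv

lemma abs_card_fract_lt_sub_le {q : ℕ} (hq : 0 < q) {a : ℤ} (hcop : IsCoprime a q)
    {β δ : ℝ} {v : ℕ → ℝ} (hδ₀ : 0 ≤ δ) (hδ₁ : δ ≤ 1)
    (hv : ∀ h < q, |v h - (β + a * h / q)| ≤ 2 / q) :
    |(#{h ∈ range q | Int.fract (v h) < δ} : ℝ) - q * δ| ≤ 11 := by
  set T : ℤ := ⌈q * δ⌉
  set ρ : ℕ → ℤ := fun h ↦ (⌊q * β⌋ + a * (h : ℤ)) % q
  set E : Finset ℤ := Ico 0 2 ∪ Ico (q - 3) q ∪ Ico (T - 3) (T + 2)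
  have hiff : ∀ h ∈ range q, ρ h ∉ E → (Int.fract (v h) < δ ↔ ρ h < T) := fun h hh hE ↦ by
    have hnonneg : 0 ≤ ρ h := Int.emod_nonneg _ (by lia)
    have hlt : ρ h < q := Int.emod_lt_of_pos _ (by lia)
    obtain ⟨w, t, ht₀, ht₁, hvh⟩ := exists_eq_int_add_residue_div (A := a * h) hq
      (by exact_mod_cast hv h (mem_range.1 hh))
    simp only [E, mem_union, not_or, mem_Ico (a := (0 : ℤ)), mem_Ico (b := (q : ℤ))] at hE
    exact fract_lt_iff_of_near_residue hq hvh ht₀ ht₁ (by lia) (by lia) hE.2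
  have hT₀ : 0 ≤ T := Int.ceil_nonneg (by positivity)
  have hTq : T ≤ q := Int.ceil_le.2 (mul_le_of_le_one_right (by positivity) hδ₁)
  have hmain : (#{h ∈ range q | ρ h < T} : ℝ) = T := by
    have hIco : {r ∈ Ico (0 : ℤ) q | r < T} = Ico 0 T := by grind
    rw [card_filter_emod_add_mul hq hcop _ (· < T), hIco, Int.card_Ico, sub_zero]
    exact_mod_cast Int.toNat_of_nonneg hT₀
  have hexc : (#{h ∈ range q | ρ h ∈ E} : ℝ) ≤ 10 := by
    rw [card_filter_emod_add_mul hq hcop _ (· ∈ E)]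
    have hE : #E ≤ 10 := (card_union_le _ _).trans <|
      (Nat.add_le_add_right (card_union_le _ _) _).trans (by simp only [Int.card_Ico]; lia)
    exact_mod_cast (card_le_card fun r hr ↦ (mem_filter.1 hr).2).trans hE
  have hdiff := abs_card_filter_sub_card_filter_le hiff
  rw [hmain] at hdiff
  have hTδ : |(T : ℝ) - q * δ| ≤ 1 := by
    rw [abs_le]
    constructor <;> linarith [Int.le_ceil (q * δ), Int.ceil_lt_add_one (q * δ)]
  linarith [abs_sub_le (#{h ∈ range q | Int.fract (v h) < δ} : ℝ) T (q * δ)]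


lemma abs_count_sub_mul_le (P : ℕ → Prop) [DecidablePred P] (n : ℕ) {δ : ℝ} (hδ₀ : 0 ≤ δ)
    (hδ₁ : δ ≤ 1) : |(Nat.count P n : ℝ) - n * δ| ≤ n := by
  have hcount : (Nat.count P n : ℝ) ≤ n := mod_cast Nat.count_le P
  have hmul : n * δ ≤ n := mul_le_of_le_one_right (by positivity) hδ₁
  rw [abs_le]
  constructor <;> nlinarith [(Nat.count P n).cast_nonneg (α := ℝ)]

-- Walk from `0` to `n`, jumping over a well-distributed block from each good integer and over a
-- single integer from each bad one.
lemma abs_count_sub_le_of_blocks {P bad : ℕ → Prop} [DecidablePred P] [DecidablePred bad]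
    {n H : ℕ} {C δ q₀ : ℝ} (hC : 0 ≤ C) (hδ₀ : 0 ≤ δ) (hδ₁ : δ ≤ 1) (hq₀ : 0 < q₀)
    (hblock : ∀ s, s + H ≤ n → ¬ bad s → ∃ q ≤ H, q₀ ≤ q ∧
      |(Nat.count (fun k ↦ P (s + k)) q : ℝ) - q * δ| ≤ C) :
    |(Nat.count P n : ℝ) - n * δ| ≤ C * (n / q₀) + Nat.count bad n + H := by
  induction n using Nat.strong_induction_on generalizing P bad with
  | _ n ih =>
  rcases le_or_gt n H with hnH | hHn
  · calc |(Nat.count P n : ℝ) - n * δ| ≤ n := abs_count_sub_mul_le P n hδ₀ hδ₁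
      _ ≤ H := mod_cast hnH
      _ ≤ _ := le_add_of_nonneg_left (by positivity)
  have hstep : ∀ q, 0 < q → q ≤ n →
      |(Nat.count P q : ℝ) - q * δ| ≤ C * (q / q₀) + Nat.count bad q →
      |(Nat.count P n : ℝ) - n * δ| ≤ C * (n / q₀) + Nat.count bad n + H := fun q hq hqn hfirst ↦ by
    obtain ⟨m, rfl⟩ := Nat.exists_eq_add_of_le hqn
    have hrest := ih m (by lia) (P := fun k ↦ P (q + k)) (bad := fun k ↦ bad (q + k))
      fun s hs hbad ↦ by simpa only [add_assoc] using hblock (q + s) (by lia) hbad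
    rw [Nat.count_add, Nat.count_add]
    push_cast
    calc _ = |((Nat.count P q : ℝ) - q * δ) + ((Nat.count (fun k ↦ P (q + k)) m : ℝ) - m * δ)| := by
          congr 1
          ring
      _ ≤ _ := abs_add_le _ _
      _ ≤ _ := add_le_add hfirst hrest
      _ = _ := by ring
  by_cases hbad : bad 0
  · refine hstep 1 one_pos (by lia) ((abs_count_sub_mul_le P 1 hδ₀ hδ₁).trans ?_)
    simp only [Nat.count_succ, Nat.count_zero, hbad, if_true, zero_add, Nat.cast_one]
    exact le_add_of_nonneg_left (by positivity)
  · obtain ⟨q, hqH, hq₀q, hq⟩ := hblock 0 (by lia) hbad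
    simp only [zero_add] at hq
    refine hstep q (Nat.cast_pos.1 (hq₀.trans_le hq₀q)) (by lia) (hq.trans ?_)
    calc C = C * 1 := (mul_one C).symm
      _ ≤ C * (q / q₀) := by gcongr; rwa [one_le_div hq₀]
      _ ≤ _ := le_add_of_nonneg_right (by positivity)


/-- The points within `1 / ((H + 1) * q)` of a fraction with denominator `q < q₀`, the major arcs of
Dirichlet approximation of order `H`. -/
def IsMajorArcPoint (H q₀ : ℕ) (x : ℝ) : Prop :=
  ∃ r : ℚ, |x - r| ≤ 1 / ((H + 1) * r.den) ∧ r.den < q₀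

lemma IsMajorArcPoint.exists_near_fraction {H q₀ : ℕ} {x F : ℝ} (h : IsMajorArcPoint H q₀ x)
    (hH : 0 < H) (hx₀ : 0 ≤ x) (hxF : x ≤ F) :
    ∃ q < q₀, ∃ p < ⌊q₀ * F⌋₊ + 2, |x - (p : ℝ) / q| ≤ 1 / H := by
  obtain ⟨r, hxr, hden⟩ := h
  have hH' : (1 : ℝ) ≤ H := mod_cast hH
  have hd : (1 : ℝ) ≤ r.den := mod_cast r.pos
  have hdq : (r.den : ℝ) ≤ q₀ := mod_cast hden.le
  have hr : (r : ℝ) = r.num / r.den := mod_cast (Rat.num_div_den r).symm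
  have hnear : |x * r.den - r.num| < 1 := by
    have hmul : x * r.den - r.num = (x - r) * r.den := by rw [hr]; field_simp
    rw [hmul, abs_mul, abs_of_pos (by linarith : (0 : ℝ) < r.den)]
    calc |x - r| * r.den ≤ 1 / ((H + 1) * r.den) * r.den := by gcongr
      _ = 1 / (H + 1) := by field_simp
      _ < 1 := by rw [div_lt_one (by linarith)]; linarith
  rw [abs_lt] at hnear
  have hnum : (-1 : ℤ) < r.num := by
    have : (-1 : ℝ) < r.num := by nlinarith [mul_nonneg hx₀ (by linarith : (0 : ℝ) ≤ r.den)]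
    exact_mod_cast this
  obtain ⟨p, hp⟩ := Int.eq_ofNat_of_zero_le (show 0 ≤ r.num by lia)
  rw [hp, Int.cast_natCast] at hnear hr
  refine ⟨r.den, hden, p, ?_, ?_⟩
  · have hxq : x * r.den ≤ q₀ * F := by nlinarith
    have : (p : ℝ) < ⌊q₀ * F⌋₊ + 2 := by linarith [Nat.lt_floor_add_one (q₀ * F)]
    exact_mod_cast this
  · rw [← hr]
    refine hxr.trans (one_div_le_one_div_of_le (by linarith) ?_)
    nlinarith

variable {f g : ℕ → ℝ} {n H : ℕ} {l₀ l₁ : ℝ}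

lemma QuadraticBounds.card_isMajorArcPoint_le (h : QuadraticBounds f g n l₀ l₁) (hl₀ : 0 < l₀)
    {F : ℝ} (hF : 0 ≤ F) (hg : ∀ k < n, 0 ≤ g k ∧ g k ≤ F) (hH : 0 < H) (q₀ : ℕ)
    [DecidablePred fun k ↦ IsMajorArcPoint H q₀ (g k)] :
    (Nat.count (fun k ↦ IsMajorArcPoint H q₀ (g k)) n : ℝ) ≤
      q₀ * (q₀ * F + 2) * (1 + 2 / (H * l₀)) := by
  classical
  set fractions := range q₀ ×ˢ range (⌊q₀ * F⌋₊ + 2)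
  set cell : ℕ × ℕ → Finset ℕ := fun i ↦ {k ∈ range n | |g k - (i.2 : ℝ) / i.1| ≤ 1 / H}
  have hcover : {k ∈ range n | IsMajorArcPoint H q₀ (g k)} ⊆ fractions.biUnion cell := by
    intro k hk
    obtain ⟨hkn, hk⟩ := mem_filter.1 hk
    obtain ⟨hg₀, hgF⟩ := hg k (mem_range.1 hkn)
    obtain ⟨q, hq, p, hp, hpq⟩ := hk.exists_near_fraction hH hg₀ hgF
    exact mem_biUnion.2 ⟨(q, p), mem_product.2 ⟨mem_range.2 hq, mem_range.2 hp⟩,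
      mem_filter.2 ⟨hkn, hpq⟩⟩
  have hcell : ∀ i, (#(cell i) : ℝ) ≤ 1 + 2 / (H * l₀) := fun i ↦ by
    have := h.card_slope_near_le hl₀ (T := cell i) (q := 1) (ρ := 1 / H) one_pos (by positivity)
      (fun t ht ↦ mem_range.1 (mem_filter.1 ht).1) (fun s _ t _ hst ↦ hst)
      (fun t ht ↦ (mem_filter.1 ht).2)
    calc (#(cell i) : ℝ) ≤ _ := this
      _ = _ := by push_cast; field_simp
  rw [Nat.count_eq_card_filter_range]
  calc (#{k ∈ range n | IsMajorArcPoint H q₀ (g k)} : ℝ)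
      ≤ ∑ i ∈ fractions, (#(cell i) : ℝ) := mod_cast (card_le_card hcover).trans card_biUnion_le
    _ ≤ ∑ i ∈ fractions, (1 + 2 / (H * l₀)) := sum_le_sum fun i _ ↦ hcell i
    _ = q₀ * (⌊q₀ * F⌋₊ + 2) * (1 + 2 / (H * l₀)) := by
          simp only [fractions, sum_const, card_product, card_range, nsmul_eq_mul]
          push_cast
          ring
    _ ≤ _ := by gcongr; exact Nat.floor_le (by positivity)

lemma QuadraticBounds.abs_sub_linear_le (h : QuadraticBounds f g n l₀ l₁) (hl₀ : 0 ≤ l₀)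
    (hlH : l₁ * H ^ 3 ≤ 2) {s j : ℕ} (hs : s + H ≤ n) {r : ℚ}
    (hr : |g s - r| ≤ 1 / ((H + 1) * r.den)) (hrH : r.den ≤ H) (hj : j < r.den) :
    |f (s + j) - (f s + r.num * j / r.den)| ≤ 2 / r.den := by
  have hd : (0 : ℝ) < r.den := mod_cast r.pos
  have hjd : (j : ℝ) ≤ r.den := mod_cast hj.le
  have hdH : (r.den : ℝ) ≤ H := mod_cast hrH
  obtain ⟨hlower, hupper⟩ := h s (by lia) (s + j) (by lia)
  rw [Nat.cast_add, add_sub_cancel_left] at hlower hupper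
  have hnonneg : 0 ≤ l₀ / 2 * (j : ℝ) ^ 2 := by positivity
  have htaylor : |f (s + j) - f s - g s * j| ≤ 1 / r.den := by
    rw [abs_of_nonneg (hnonneg.trans hlower), le_div_iff₀ hd]
    have hcube : (j : ℝ) ^ 2 * r.den ≤ (H : ℝ) ^ 3 := by
      calc (j : ℝ) ^ 2 * r.den ≤ (H : ℝ) ^ 2 * H := by gcongr; linarith
        _ = (H : ℝ) ^ 3 := by ring
    have hl₁ : l₁ * ((j : ℝ) ^ 2 * r.den) ≤ 2 := by
      rcases le_total 0 l₁ with hl₁ | hl₁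
      · exact (mul_le_mul_of_nonneg_left hcube hl₁).trans hlH
      · exact (mul_nonpos_of_nonpos_of_nonneg hl₁ (by positivity)).trans zero_le_two
    calc _ ≤ l₁ / 2 * (j : ℝ) ^ 2 * r.den := by gcongr
      _ ≤ 1 := by linarith
  have hslope : |(g s - r) * j| ≤ 1 / r.den := by
    rw [abs_mul, Nat.abs_cast]
    calc |g s - r| * j ≤ 1 / ((H + 1) * r.den) * r.den := by gcongr
      _ = 1 / (H + 1) := by field_simp
      _ ≤ 1 / r.den := by gcongr; linarith
  calc |f (s + j) - (f s + r.num * j / r.den)|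
      = |(f (s + j) - f s - g s * j) + (g s - r) * j| := by
        rw [show (r : ℝ) = r.num / r.den from mod_cast (Rat.num_div_den r).symm]
        congr 1
        ring
    _ ≤ 1 / r.den + 1 / r.den := (abs_add_le _ _).trans (add_le_add htaylor hslope)
    _ = 2 / r.den := by ring

theorem QuadraticBounds.abs_count_fract_lt_sub_le (h : QuadraticBounds f g n l₀ l₁) (hl₀ : 0 < l₀)
    {F δ : ℝ} (hF : 0 ≤ F) (hg : ∀ k < n, 0 ≤ g k ∧ g k ≤ F) (hδ₀ : 0 ≤ δ) (hδ₁ : δ ≤ 1)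
    (hH : 0 < H) (hlH : l₁ * H ^ 3 ≤ 2) {q₀ : ℕ} (hq₀ : 0 < q₀) :
    |(Nat.count (fun k ↦ Int.fract (f k) < δ) n : ℝ) - n * δ| ≤
      11 * (n / q₀) + q₀ * (q₀ * F + 2) * (1 + 2 / (H * l₀)) + H := by
  classical
  have hblock : ∀ s, s + H ≤ n → ¬ IsMajorArcPoint H q₀ (g s) → ∃ q ≤ H, (q₀ : ℝ) ≤ q ∧
      |(Nat.count (fun j ↦ Int.fract (f (s + j)) < δ) q : ℝ) - q * δ| ≤ 11 := fun s hs hminor ↦ by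
    obtain ⟨r, hr, hrH⟩ := Real.exists_rat_abs_sub_le_and_den_le (g s) hH
    refine ⟨r.den, hrH, ?_, ?_⟩
    · rw [Nat.cast_le]
      by_contra! hlt
      exact hminor ⟨r, hr, hlt⟩
    · rw [Nat.count_eq_card_filter_range]
      exact abs_card_fract_lt_sub_le r.pos (Rat.isCoprime_num_den r) hδ₀ hδ₁
        fun j hj ↦ h.abs_sub_linear_le hl₀.le hlH hs hr hrH hj
  refine (abs_count_sub_le_of_blocks (P := fun k ↦ Int.fract (f k) < δ)
    (bad := fun k ↦ IsMajorArcPoint H q₀ (g k)) (by norm_num) hδ₀ hδ₁ (mod_cast hq₀)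
    hblock).trans ?_
  gcongr
  exact h.card_isMajorArcPoint_le hl₀ hF hg hH q₀

end Equidistribution

section UpperBound

variable {f g : ℕ → ℝ} {n : ℕ} {l₀ l₁ δ L : ℝ}

lemma QuadraticBounds.second_difference_bounds (h : QuadraticBounds f g n l₀ l₁) {s a b : ℕ}
    (hs : s + a + b < n) :
    l₀ / 2 * (a * b * (a + b)) ≤ f s * b - f (s + a) * (a + b) + f (s + a + b) * a ∧
      f s * b - f (s + a) * (a + b) + f (s + a + b) * a ≤ l₁ / 2 * (a * b * (a + b)) := by
  obtain ⟨hleft₀, hleft₁⟩ := h (s + a) (by lia) s (by lia)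
  obtain ⟨hright₀, hright₁⟩ := h (s + a) (by lia) (s + a + b) hs
  push_cast at hleft₀ hleft₁ hright₀ hright₁
  have ha : (0 : ℝ) ≤ a := a.cast_nonneg
  have hb : (0 : ℝ) ≤ b := b.cast_nonneg
  constructor
  · linarith [mul_le_mul_of_nonneg_right hleft₀ hb, mul_le_mul_of_nonneg_right hright₀ ha]
  · linarith [mul_le_mul_of_nonneg_right hleft₁ hb, mul_le_mul_of_nonneg_right hright₁ ha]

lemma mul_mul_add_le_cube_div_four {x y z : ℝ} (hx : 0 ≤ x) (hy : 0 ≤ y) (h : x + y ≤ z) :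
    x * y * (x + y) ≤ z ^ 3 / 4 := by
  calc x * y * (x + y) ≤ (x + y) ^ 2 / 4 * (x + y) := by
        gcongr
        nlinarith [sq_nonneg (x - y)]
    _ = (x + y) ^ 3 / 4 := by ring
    _ ≤ z ^ 3 / 4 := by gcongr

-- The second difference of the integer parts is an integer of absolute value less than `1`.
lemma QuadraticBounds.floor_second_difference_eq_zero (h : QuadraticBounds f g n l₀ l₁)
    (hl₀ : 0 ≤ l₀) {s a b : ℕ} (ha : 0 < a) (hs : s + a + b < n) (hL : (a : ℝ) + b ≤ L)
    (hδL : 2 * δ * L ≤ 1) (hlL : l₁ * L ^ 3 ≤ 1) (hδ₁ : Int.fract (f s) < δ)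
    (hδ₂ : Int.fract (f (s + a)) < δ) (hδ₃ : Int.fract (f (s + a + b)) < δ) :
    ⌊f s⌋ * b - ⌊f (s + a)⌋ * (a + b) + ⌊f (s + a + b)⌋ * a = 0 := by
  obtain ⟨hlower, hupper⟩ := h.second_difference_bounds hs
  have haR : (0 : ℝ) < a := mod_cast ha
  have hbR : (0 : ℝ) ≤ b := b.cast_nonneg
  have hδ : 0 ≤ δ := (Int.fract_nonneg _).trans hδ₁.le
  have hδab : 2 * δ * (a + b) ≤ 1 := (mul_le_mul_of_nonneg_left hL (by positivity)).trans hδL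
  have hcubic : l₁ / 2 * (a * b * (a + b)) ≤ 1 / 8 := by
    have hprod := mul_mul_add_le_cube_div_four haR.le hbR hL
    rcases le_total 0 l₁ with hl₁ | hl₁
    · linarith [mul_le_mul_of_nonneg_left hprod hl₁]
    · linarith [mul_nonpos_of_nonpos_of_nonneg hl₁ (show (0 : ℝ) ≤ a * b * (a + b) by positivity)]
  have hconvex : 0 ≤ l₀ / 2 * (a * b * (a + b)) := by positivity
  have hint : ((⌊f s⌋ * b - ⌊f (s + a)⌋ * (a + b) + ⌊f (s + a + b)⌋ * a : ℤ) : ℝ) =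
      f s * b - f (s + a) * (a + b) + f (s + a + b) * a - (Int.fract (f s) * b -
        Int.fract (f (s + a)) * (a + b) + Int.fract (f (s + a + b)) * a) := by
    push_cast
    simp only [Int.fract]
    ring
  have hfract₁ := mul_le_mul_of_nonneg_right hδ₁.le hbR
  have hfract₂ := mul_le_mul_of_nonneg_right hδ₂.le (add_nonneg haR.le hbR)
  have hfract₃ := mul_le_mul_of_nonneg_right hδ₃.le haR.le
  have hnonneg₁ := mul_nonneg (Int.fract_nonneg (f s)) hbR
  have hnonneg₂ := mul_nonneg (Int.fract_nonneg (f (s + a))) (add_nonneg haR.le hbR)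
  have hnonneg₃ := mul_nonneg (Int.fract_nonneg (f (s + a + b))) haR.le
  refine Int.abs_lt_one_iff.1 ?_
  rw [← Int.cast_lt (R := ℝ), Int.cast_abs, Int.cast_one, hint, abs_lt]
  constructor <;> linarith

lemma QuadraticBounds.mul_gaps_le (h : QuadraticBounds f g n l₀ l₁) {s a b : ℕ}
    (ha : 0 < a) (hs : s + a + b < n)
    (hfloor : ⌊f s⌋ * b - ⌊f (s + a)⌋ * (a + b) + ⌊f (s + a + b)⌋ * a = 0)
    (hδ₁ : Int.fract (f s) < δ) (hδ₃ : Int.fract (f (s + a + b)) < δ) :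
    l₀ * (a * b) ≤ 2 * δ := by
  have haR : (0 : ℝ) < a := mod_cast ha
  have hbR : (0 : ℝ) ≤ b := b.cast_nonneg
  have hfloorR : (⌊f s⌋ : ℝ) * b - ⌊f (s + a)⌋ * (a + b) + ⌊f (s + a + b)⌋ * a = 0 :=
    mod_cast hfloor
  have hlower := (h.second_difference_bounds hs).1
  rw [← Int.floor_add_fract (f s), ← Int.floor_add_fract (f (s + a)),
    ← Int.floor_add_fract (f (s + a + b))] at hlower
  have hfract₂ := mul_nonneg (Int.fract_nonneg (f (s + a))) (add_nonneg haR.le hbR)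
  refine le_of_mul_le_mul_right ?_ (add_pos_of_pos_of_nonneg haR hbR)
  nlinarith [mul_le_mul_of_nonneg_right hδ₁.le hbR, mul_le_mul_of_nonneg_right hδ₃.le haR.le]

lemma exists_rat_eq_div_of_collinear {m₁ m₂ m₃ : ℤ} {a b : ℕ} (ha : 0 < a) (hb : 0 < b)
    (h : m₁ * b - m₂ * (a + b) + m₃ * a = 0) :
    ∃ r : ℚ, (r : ℝ) = (m₂ - m₁) / a ∧ (r : ℝ) = (m₃ - m₂) / b ∧ r.den ≤ a ∧ r.den ≤ b := by
  have heq : Rat.divInt (m₂ - m₁) a = Rat.divInt (m₃ - m₂) b :=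
    (Rat.divInt_eq_divInt_iff (by lia) (by lia)).2 (by linarith)
  have hcast : ∀ (m : ℤ) (k : ℕ), ((Rat.divInt m k : ℚ) : ℝ) = m / k := fun m k ↦ by
    rw [Rat.divInt_eq_div]
    push_cast
    rfl
  have hden : ∀ (m : ℤ) {k : ℕ}, 0 < k → (Rat.divInt m k).den ≤ k := fun m k hk ↦
    Nat.le_of_dvd hk (Int.natCast_dvd_natCast.1 (Rat.den_dvd m k))
  refine ⟨Rat.divInt (m₂ - m₁) a, ?_, ?_, hden _ ha, ?_⟩
  · rw [hcast, Int.cast_sub]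
  · rw [heq, hcast, Int.cast_sub]
  · rw [heq]
    exact hden _ hb

-- The three integer points `(k, ⌊f k⌋)` are collinear, and the slope of their common line is `r`.
lemma QuadraticBounds.exists_rat_near_slope (h : QuadraticBounds f g n l₀ l₁) (hl₀ : 0 ≤ l₀)
    {s a b : ℕ} (ha : 0 < a) (hb : 0 < b) (hs : s + a + b < n) (hL : (a : ℝ) + b ≤ L)
    (hδL : 2 * δ * L ≤ 1) (hlL : l₁ * L ^ 3 ≤ 1) (hδ₁ : Int.fract (f s) < δ)
    (hδ₂ : Int.fract (f (s + a)) < δ) (hδ₃ : Int.fract (f (s + a + b)) < δ) :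
    ∃ r : ℚ, r.den ≤ b ∧ l₀ * r.den ^ 2 ≤ 2 * δ ∧ |g (s + a) - r| ≤ δ / r.den := by
  have hfloor := h.floor_second_difference_eq_zero hl₀ ha hs hL hδL hlL hδ₁ hδ₂ hδ₃
  obtain ⟨r, hra, hrb, hda, hdb⟩ := exists_rat_eq_div_of_collinear ha hb hfloor
  have hδ : 0 ≤ δ := (Int.fract_nonneg _).trans hδ₁.le
  have haR : (0 : ℝ) < a := mod_cast ha
  have hbR : (0 : ℝ) < b := mod_cast hb
  have hda' : (r.den : ℝ) ≤ a := mod_cast hda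
  have hdb' : (r.den : ℝ) ≤ b := mod_cast hdb
  refine ⟨r, hdb, ?_, ?_⟩
  · calc l₀ * (r.den : ℝ) ^ 2 ≤ l₀ * (a * b) := by rw [sq]; gcongr
      _ ≤ 2 * δ := h.mul_gaps_le ha hs hfloor hδ₁ hδ₃
  · have hleft := (h (s + a) (by lia) s (by lia)).1
    have hright := (h (s + a) (by lia) (s + a + b) hs).1
    push_cast at hleft hright
    have hleft₀ : 0 ≤ l₀ / 2 * ((s : ℝ) - (s + a)) ^ 2 := by positivity
    have hright₀ : 0 ≤ l₀ / 2 * ((s : ℝ) + a + b - (s + a)) ^ 2 := by positivity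
    have hlower : r - δ / a ≤ g (s + a) := by
      rw [hra, ← sub_div, div_le_iff₀ haR]
      linarith [Int.floor_add_fract (f s), Int.floor_add_fract (f (s + a)),
        Int.fract_nonneg (f (s + a))]
    have hupper : g (s + a) ≤ r + δ / b := by
      rw [hrb, ← add_div, le_div_iff₀ hbR]
      linarith [Int.floor_add_fract (f (s + a + b)), Int.floor_add_fract (f (s + a)),
        Int.fract_nonneg (f (s + a))]
    have hdiva : δ / a ≤ δ / r.den := by gcongr
    have hdivb : δ / b ≤ δ / r.den := by gcongr
    rw [abs_le]
    constructor <;> linarith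


lemma exists_rat_natCast_num_eq_div {r : ℚ} (hr : 0 < r) :
    ∃ p : ℕ, 0 < p ∧ (r : ℝ) = p / r.den := by
  refine ⟨r.num.toNat, by have := Rat.num_pos.2 hr; lia, ?_⟩
  have hnum : ((r.num.toNat : ℤ) : ℝ) = r.num := by
    rw [Int.toNat_of_nonneg (Rat.num_nonneg.2 hr.le)]
  rw [← Int.cast_natCast, hnum]
  exact_mod_cast (Rat.num_div_den r).symm

-- A point with neighbours in `S` close on both sides is the middle of a short triple.
lemma QuadraticBounds.exists_fraction_near_slope (h : QuadraticBounds f g n l₀ l₁) (hl₀ : 0 ≤ l₀)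
    {F : ℝ} (hg : ∀ k < n, δ < g k ∧ g k ≤ F) (hδL : 2 * δ * L ≤ 1) (hlL : l₁ * L ^ 3 ≤ 1)
    {S : Finset ℕ} (hS : ∀ k ∈ S, k < n ∧ Int.fract (f k) < δ) {k : ℕ} (hk : k ∈ S)
    (hleft : ∃ s ∈ S, s < k ∧ k < s + ⌈L / 2⌉₊) (hright : ∃ t ∈ S, k < t ∧ t < k + ⌈L / 2⌉₊) :
    ∃ q ∈ Icc 1 n, l₀ * (q : ℝ) ^ 2 ≤ 2 * δ ∧ ∃ p ∈ Icc 1 ⌊2 * q * F⌋₊,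
      |g k - (p : ℝ) / q| ≤ δ / q ∧ ∀ t ∈ S, k < t → k + q ≤ t := by
  obtain ⟨s, hs, hsk, hks⟩ := hleft
  obtain ⟨t, ⟨ht, hkt, htk⟩, htmin⟩ := Nat.findX hright
  have hδ : 0 ≤ δ := (Int.fract_nonneg _).trans (hS k hk).2.le
  obtain ⟨a, rfl⟩ := Nat.exists_eq_add_of_lt hsk
  obtain ⟨b, rfl⟩ := Nat.exists_eq_add_of_lt hkt
  have ha : ((a + 1 : ℕ) : ℝ) < L / 2 := Nat.lt_ceil.1 (by lia)
  have hb : ((b + 1 : ℕ) : ℝ) < L / 2 := Nat.lt_ceil.1 (by lia)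
  obtain ⟨r, hrb, hden, hr⟩ := h.exists_rat_near_slope hl₀ a.succ_pos b.succ_pos (hS _ ht).1
    (by linarith) hδL hlL (hS s hs).2 (hS _ hk).2 (hS _ ht).2
  rw [Nat.succ_eq_add_one, ← add_assoc] at hr
  have hd : (1 : ℝ) ≤ r.den := mod_cast r.pos
  have hδd : δ / r.den ≤ δ := div_le_self hδ hd
  obtain ⟨hrlo, hrhi⟩ := abs_le.1 hr
  obtain ⟨hgδ, hgF⟩ := hg _ (hS _ hk).1
  obtain ⟨p, hp, hrp⟩ := exists_rat_natCast_num_eq_div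
    (show 0 < r by rw [← Rat.cast_pos (K := ℝ)]; linarith)
  refine ⟨r.den, mem_Icc.2 ⟨r.pos, ?_⟩, hden, p, mem_Icc.2 ⟨hp, ?_⟩, hrp ▸ hr, fun t' ht' hkt' ↦ ?_⟩
  · have := (hS _ ht).1
    lia
  · have hr2F : (r : ℝ) ≤ 2 * F := by linarith
    rw [hrp, div_le_iff₀ (by linarith)] at hr2F
    exact Nat.le_floor (by linarith)
  · by_contra! hlt
    exact htmin t' (by lia) ⟨ht', hkt', by lia⟩

lemma QuadraticBounds.card_near_fraction_le (h : QuadraticBounds f g n l₀ l₁) (hl₀ : 0 < l₀)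
    (hδ : 0 ≤ δ) {q : ℕ} (hq : 0 < q) (hqδ : l₀ * (q : ℝ) ^ 2 ≤ 2 * δ) {θ : ℝ} {T : Finset ℕ}
    (hT : ∀ t ∈ T, t < n) (hgap : ∀ s ∈ T, ∀ t ∈ T, s < t → s + q ≤ t)
    (hnear : ∀ t ∈ T, |g t - θ| ≤ δ / q) : (#T : ℝ) ≤ 4 * δ / (l₀ * q ^ 2) := by
  have hone : 1 ≤ 2 * δ / (l₀ * q ^ 2) := (one_le_div (by positivity)).2 hqδ
  calc (#T : ℝ) ≤ 1 + 2 * (δ / q) / (l₀ * q) :=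
        h.card_slope_near_le hl₀ hq (by positivity) hT hgap hnear
    _ = 1 + 2 * δ / (l₀ * q ^ 2) := by field_simp
    _ ≤ 2 * δ / (l₀ * q ^ 2) + 2 * δ / (l₀ * q ^ 2) := by gcongr
    _ = 4 * δ / (l₀ * q ^ 2) := by ring

lemma QuadraticBounds.card_near_fractions_le (h : QuadraticBounds f g n l₀ l₁) (hl₀ : 0 < l₀)
    {F : ℝ} (hF : 0 ≤ F) (hδ : 0 ≤ δ) {S : Finset ℕ} (hS : ∀ k ∈ S, k < n)
    (hnear : ∀ k ∈ S, ∃ q ∈ Icc 1 n, l₀ * (q : ℝ) ^ 2 ≤ 2 * δ ∧ ∃ p ∈ Icc 1 ⌊2 * q * F⌋₊,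
      |g k - (p : ℝ) / q| ≤ δ / q ∧ ∀ t ∈ S, k < t → k + q ≤ t) :
    (#S : ℝ) ≤ 8 * F * δ / l₀ * (1 + Real.log n) := by
  classical
  set cell : ℕ → ℕ → Finset ℕ := fun q p ↦
    {k ∈ S | |g k - (p : ℝ) / q| ≤ δ / q ∧ ∀ t ∈ S, k < t → k + q ≤ t}
  set denominators := (Icc 1 n).filter fun q : ℕ ↦ l₀ * (q : ℝ) ^ 2 ≤ 2 * δ
  have hcover : S ⊆ denominators.biUnion fun q ↦ (Icc 1 ⌊2 * q * F⌋₊).biUnion (cell q) := by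
    intro k hk
    obtain ⟨q, hqn, hq, p, hp, hkp⟩ := hnear k hk
    exact mem_biUnion.2 ⟨q, mem_filter.2 ⟨hqn, hq⟩,
      mem_biUnion.2 ⟨p, hp, mem_filter.2 ⟨hk, hkp⟩⟩⟩
  have hcell : ∀ q ∈ denominators, ∀ p, (#(cell q p) : ℝ) ≤ 4 * δ / (l₀ * q ^ 2) := by
    intro q hq p
    obtain ⟨hqn, hq⟩ := mem_filter.1 hq
    exact h.card_near_fraction_le hl₀ hδ (mem_Icc.1 hqn).1 hq
      (fun t ht ↦ hS t (mem_filter.1 ht).1)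
      (fun s hs t ht hst ↦ (mem_filter.1 hs).2.2 t (mem_filter.1 ht).1 hst)
      (fun t ht ↦ (mem_filter.1 ht).2.1)
  calc (#S : ℝ) ≤ ∑ q ∈ denominators, ∑ p ∈ Icc 1 ⌊2 * q * F⌋₊, (#(cell q p) : ℝ) := by
        simp only [← Nat.cast_sum]
        exact Nat.cast_le.2 <| (card_le_card hcover).trans <|
          card_biUnion_le.trans <| sum_le_sum fun _ _ ↦ card_biUnion_le
    _ ≤ ∑ q ∈ denominators, ∑ p ∈ Icc 1 ⌊2 * q * F⌋₊, 4 * δ / (l₀ * q ^ 2) :=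
        sum_le_sum fun q hq ↦ sum_le_sum fun p _ ↦ hcell q hq p
    _ ≤ ∑ q ∈ denominators, 8 * F * δ / l₀ * (q : ℝ)⁻¹ := sum_le_sum fun q hq ↦ by
        have hq₀ : (0 : ℝ) < q := mod_cast (mem_Icc.1 (mem_filter.1 hq).1).1
        rw [sum_const, Nat.card_Icc, Nat.add_sub_cancel, nsmul_eq_mul]
        calc _ ≤ 2 * q * F * (4 * δ / (l₀ * q ^ 2)) := by
              gcongr
              exact Nat.floor_le (by positivity)
          _ = _ := by field_simp; ring
    _ ≤ ∑ q ∈ Icc 1 n, 8 * F * δ / l₀ * (q : ℝ)⁻¹ :=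
        sum_le_sum_of_subset_of_nonneg (filter_subset _ _) fun q _ _ ↦ by positivity
    _ = 8 * F * δ / l₀ * (harmonic n : ℝ) := by
        rw [← mul_sum, harmonic_eq_sum_Icc]
        push_cast
        rfl
    _ ≤ _ := by gcongr; exact harmonic_le_one_add_log n

theorem QuadraticBounds.count_fract_lt_le (h : QuadraticBounds f g n l₀ l₁) (hl₀ : 0 < l₀)
    {F : ℝ} (hF : 0 ≤ F) (hg : ∀ k < n, δ < g k ∧ g k ≤ F) (hδ : 0 ≤ δ) (hL : 0 < L)
    (hδL : 2 * δ * L ≤ 1) (hlL : l₁ * L ^ 3 ≤ 1) :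
    (Nat.count (fun k ↦ Int.fract (f k) < δ) n : ℝ) ≤
      2 * (1 + n / (L / 2)) + 8 * F * δ / l₀ * (1 + Real.log n) := by
  classical
  rw [Nat.count_eq_card_filter_range]
  set S := {k ∈ range n | Int.fract (f k) < δ}
  have hS : ∀ k ∈ S, k < n ∧ Int.fract (f k) < δ := fun k hk ↦
    ⟨mem_range.1 (mem_filter.1 hk).1, (mem_filter.1 hk).2⟩
  set leftIsolated := {t ∈ S | ∀ s ∈ S, s < t → s + ⌈L / 2⌉₊ ≤ t}
  set rightIsolated := {s ∈ S | ∀ t ∈ S, s < t → s + ⌈L / 2⌉₊ ≤ t}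
  set rest := {k ∈ S | (∃ s ∈ S, s < k ∧ k < s + ⌈L / 2⌉₊) ∧ ∃ t ∈ S, k < t ∧ t < k + ⌈L / 2⌉₊}
  have hleft := card_le_one_add_div_of_ceil_gaps (T := leftIsolated) (half_pos hL)
    (fun t ht ↦ (hS t (mem_filter.1 ht).1).1)
    fun s hs t ht ↦ (mem_filter.1 ht).2 s (mem_filter.1 hs).1
  have hright := card_le_one_add_div_of_ceil_gaps (T := rightIsolated) (half_pos hL)
    (fun t ht ↦ (hS t (mem_filter.1 ht).1).1)
    fun s hs t ht ↦ (mem_filter.1 hs).2 t (mem_filter.1 ht).1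
  have hrest := h.card_near_fractions_le hl₀ hF hδ (S := rest)
    (fun k hk ↦ (hS k (mem_filter.1 hk).1).1) fun k hk ↦ by
      obtain ⟨hkS, hkl, hkr⟩ := mem_filter.1 hk
      obtain ⟨q, hqn, hq, p, hp, hkp, hgap⟩ :=
        h.exists_fraction_near_slope hl₀.le hg hδL hlL hS hkS hkl hkr
      exact ⟨q, hqn, hq, p, hp, hkp, fun t ht ↦ hgap t (mem_filter.1 ht).1⟩
  have hcover : S ⊆ leftIsolated ∪ rightIsolated ∪ rest := fun k hk ↦ by
    grind
  have hcard : (#S : ℝ) ≤ #leftIsolated + #rightIsolated + #rest := mod_cast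
    (card_le_card hcover).trans <| (card_union_le _ _).trans <|
      Nat.add_le_add_right (card_union_le _ _) _
  linarith

end UpperBound

section Taylor

lemma tangent_le_of_convexOn {S : Set ℝ} {f : ℝ → ℝ} {f' s t : ℝ}
    (hf : ConvexOn ℝ S f) (hs : s ∈ S) (ht : t ∈ S) (hd : HasDerivAt f f' s) :
    f s + f' * (t - s) ≤ f t := by
  rcases lt_trichotomy s t with hst | rfl | hst
  · have := hf.le_slope_of_hasDerivAt hs ht hst hd
    rw [slope_def_field, le_div_iff₀ (sub_pos.2 hst)] at this
    linarith
  · simp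
  · have := hf.slope_le_of_hasDerivAt ht hs hst hd
    rw [slope_def_field, div_le_iff₀ (sub_pos.2 hst)] at this
    linarith

lemma add_quadratic_le_of_le_second_deriv {S : Set ℝ} (hS : Convex ℝ S) {f f' f'' : ℝ → ℝ}
    {l s t : ℝ} (hf : ∀ u ∈ S, HasDerivAt f (f' u) u) (hf' : ∀ u ∈ S, HasDerivAt f' (f'' u) u)
    (hl : ∀ u ∈ S, l ≤ f'' u) (hs : s ∈ S) (ht : t ∈ S) :
    f s + f' s * (t - s) + l / 2 * (t - s) ^ 2 ≤ f t := by
  have hd : ∀ u ∈ S, HasDerivAt (fun u ↦ f u - l / 2 * u ^ 2) (f' u - l * u) u := fun u hu ↦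
    ((hf u hu).fun_sub ((hasDerivAt_pow 2 u).const_mul (l / 2))).congr_deriv (by ring)
  have hd' : ∀ u ∈ S, HasDerivAt (fun u ↦ f' u - l * u) (f'' u - l) u := fun u hu ↦
    ((hf' u hu).fun_sub ((hasDerivAt_id u).const_mul l)).congr_deriv (by ring)
  have hconv : ConvexOn ℝ S (fun u ↦ f u - l / 2 * u ^ 2) :=
    convexOn_of_hasDerivWithinAt2_nonneg hS
      (fun u hu ↦ (hd u hu).continuousAt.continuousWithinAt)
      (fun u hu ↦ (hd u (interior_subset hu)).hasDerivWithinAt)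
      (fun u hu ↦ (hd' u (interior_subset hu)).hasDerivWithinAt)
      (fun u hu ↦ sub_nonneg.2 (hl u (interior_subset hu)))
  have := tangent_le_of_convexOn hconv hs ht (hd s hs)
  linarith

lemma rpow_quadratic_bounds {c a b s t : ℝ} (hc1 : 1 ≤ c) (hc2 : c ≤ 2) (ha : 0 < a)
    (hs : s ∈ Set.Icc a b) (ht : t ∈ Set.Icc a b) :
    c * (c - 1) * b ^ (c - 2) / 2 * (t - s) ^ 2 ≤ t ^ c - s ^ c - c * s ^ (c - 1) * (t - s) ∧
      t ^ c - s ^ c - c * s ^ (c - 1) * (t - s) ≤ c * (c - 1) * a ^ (c - 2) / 2 * (t - s) ^ 2 := by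
  have hcc : 0 ≤ c * (c - 1) := mul_nonneg (by linarith) (by linarith)
  have hpos : ∀ u ∈ Set.Icc a b, 0 < u := fun u hu ↦ ha.trans_le hu.1
  have hd : ∀ u ∈ Set.Icc a b, HasDerivAt (fun u ↦ u ^ c) (c * u ^ (c - 1)) u := fun u hu ↦
    Real.hasDerivAt_rpow_const (Or.inl (hpos u hu).ne')
  have hd' : ∀ u ∈ Set.Icc a b,
      HasDerivAt (fun u ↦ c * u ^ (c - 1)) (c * (c - 1) * u ^ (c - 2)) u := fun u hu ↦
    ((Real.hasDerivAt_rpow_const (Or.inl (hpos u hu).ne')).const_mul c).congr_deriv (by ring_nf)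
  have hlower := add_quadratic_le_of_le_second_deriv (convex_Icc a b) hd hd'
    (l := c * (c - 1) * b ^ (c - 2)) (fun u hu ↦ mul_le_mul_of_nonneg_left
      (Real.rpow_le_rpow_of_nonpos (hpos u hu) hu.2 (by linarith)) hcc) hs ht
  have hupper := add_quadratic_le_of_le_second_deriv (convex_Icc a b)
    (fun u hu ↦ (hd u hu).neg) (fun u hu ↦ (hd' u hu).neg)
    (l := -(c * (c - 1) * a ^ (c - 2))) (fun u hu ↦ neg_le_neg (mul_le_mul_of_nonneg_left
      (Real.rpow_le_rpow_of_nonpos ha hu.1 (by linarith)) hcc)) hs ht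
  simp only [Pi.neg_apply] at hupper
  constructor <;> linarith

lemma quadraticBounds_rpow {c a b : ℝ} (hc1 : 1 ≤ c) (hc2 : c ≤ 2) (ha : 0 < a) {x : ℝ} {h D : ℝ}
    (hD : 0 ≤ D) {n : ℕ} (hx : ∀ k < n, x + h * (k : ℕ) ∈ Set.Icc a b) :
    QuadraticBounds (fun k ↦ (x + h * k) ^ c / D) (fun k ↦ h * (c * (x + h * k) ^ (c - 1)) / D) n
      (h ^ 2 * (c * (c - 1) * b ^ (c - 2)) / D) (h ^ 2 * (c * (c - 1) * a ^ (c - 2)) / D) := by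
  intro s hs t ht
  have h' := rpow_quadratic_bounds hc1 hc2 ha (hx s hs) (hx t ht)
  have hlower := div_le_div_of_nonneg_right h'.1 hD
  have hupper := div_le_div_of_nonneg_right h'.2 hD
  constructor
  · refine (Eq.trans_le ?_ hlower).trans_eq ?_ <;> ring
  · refine (Eq.trans_le ?_ hupper).trans_eq ?_ <;> ring

end Taylor

section Sieve

/-- The indicator function of the cube-free numbers. -/
noncomputable def cubeFreeIndicator (m : ℕ) : ℝ := if CubeFree m then 1 else 0

/-- The sum `∑ μ(d)` over the `d ≤ z` with `d³ ∣ m`, which for `z = m` is the indicator of the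
cube-free numbers. -/
noncomputable def cubeSieve (z m : ℕ) : ℝ :=
  ∑ d ∈ Ioc 0 z with d ^ 3 ∣ m, (ArithmeticFunction.moebius d : ℝ)

/-- The partial sum `∑ μ(d)/d³` over `d ≤ z` of the Dirichlet series of `1/ζ(3)`. -/
noncomputable def cubeFreeDensity (z : ℕ) : ℝ :=
  ∑ d ∈ Ioc 0 z, (ArithmeticFunction.moebius d : ℝ) / (d : ℝ) ^ 3

lemma abs_moebius_cast_le_one (d : ℕ) : |(ArithmeticFunction.moebius d : ℝ)| ≤ 1 :=
  mod_cast ArithmeticFunction.abs_moebius_le_one (n := d)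

lemma cubeFree_iff_floorRoot_eq_one {m : ℕ} : CubeFree m ↔ Nat.floorRoot 3 m = 1 := by
  rw [Nat.eq_one_iff_not_exists_prime_dvd]
  simp only [CubeFree, Nat.pow_dvd_iff_dvd_floorRoot]

lemma cubeFreeIndicator_eq_sum_moebius (m : ℕ) : cubeFreeIndicator m =
    ∑ d ∈ (Nat.floorRoot 3 m).divisors, (ArithmeticFunction.moebius d : ℝ) := by
  have h := congr($ArithmeticFunction.moebius_mul_coe_zeta (Nat.floorRoot 3 m))
  rw [ArithmeticFunction.coe_mul_zeta_apply, ArithmeticFunction.one_apply] at h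
  simp only [cubeFreeIndicator, cubeFree_iff_floorRoot_eq_one, ← Int.cast_sum, h, Int.cast_ite,
    Int.cast_one, Int.cast_zero]

lemma abs_cubeFreeIndicator_le_one (m : ℕ) : |cubeFreeIndicator m| ≤ 1 := by
  unfold cubeFreeIndicator
  split_ifs <;> simp

lemma abs_cubeSieve_le (z m : ℕ) : |cubeSieve z m| ≤ z := by
  calc |cubeSieve z m| ≤ ∑ d ∈ Ioc 0 z with d ^ 3 ∣ m, |(ArithmeticFunction.moebius d : ℝ)| :=
        abs_sum_le_sum_abs _ _
    _ ≤ #{d ∈ Ioc 0 z | d ^ 3 ∣ m} • (1 : ℝ) :=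
        sum_le_card_nsmul _ _ _ fun d _ ↦ abs_moebius_cast_le_one d
    _ ≤ z := by
        rw [nsmul_one]
        exact mod_cast (card_filter_le _ _).trans_eq (Nat.card_Ioc 0 z)

lemma abs_cubeFreeIndicator_sub_cubeSieve_le {m B : ℕ} (hm : m ≠ 0)
    (hB : ∀ d, d ^ 3 ∣ m → d ≤ B) (z : ℕ) :
    |cubeFreeIndicator m - cubeSieve z m| ≤ #{d ∈ Ioc z B | d ^ 3 ∣ m} := by
  have hmem {d : ℕ} : d ∈ (Nat.floorRoot 3 m).divisors ↔ d ^ 3 ∣ m := by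
    rw [Nat.mem_divisors, Nat.pow_dvd_iff_dvd_floorRoot, and_iff_left]
    exact Nat.floorRoot_ne_zero.2 ⟨three_ne_zero, hm⟩
  have hsmall : cubeSieve z m =
      ∑ d ∈ (Nat.floorRoot 3 m).divisors with d ≤ z, (ArithmeticFunction.moebius d : ℝ) := by
    refine sum_congr (ext fun d ↦ ?_) fun _ _ ↦ rfl
    simp only [mem_filter, mem_Ioc, hmem]
    have hpos : d ^ 3 ∣ m → 0 < d := fun hd ↦ Nat.pos_of_ne_zero fun h ↦ hm (by simpa [h] using hd)
    tauto
  rw [cubeFreeIndicator_eq_sum_moebius, hsmall,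
    ← sum_filter_add_sum_filter_not _ (fun d ↦ d ≤ z), add_sub_cancel_left]
  calc |∑ d ∈ (Nat.floorRoot 3 m).divisors with ¬ d ≤ z, (ArithmeticFunction.moebius d : ℝ)|
      ≤ #{d ∈ (Nat.floorRoot 3 m).divisors | ¬ d ≤ z} • (1 : ℝ) :=
        (abs_sum_le_sum_abs _ _).trans <|
          sum_le_card_nsmul _ _ _ fun d _ ↦ abs_moebius_cast_le_one d
    _ ≤ #{d ∈ Ioc z B | d ^ 3 ∣ m} := by
        rw [nsmul_one]
        refine mod_cast card_le_card fun d hd ↦ ?_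
        rw [mem_filter, hmem] at hd
        exact mem_filter.2 ⟨mem_Ioc.2 ⟨not_le.1 hd.2, hB d hd.1⟩, hd.1⟩

lemma sum_Ioc_inv_cube_le {z : ℕ} (hz : 0 < z) (n : ℕ) :
    ∑ d ∈ Ioc z n, 1 / (d : ℝ) ^ 3 ≤ 1 / (z : ℝ) ^ 2 := by
  have hz₀ : (0 : ℝ) < z := mod_cast hz
  rcases le_or_gt n z with hn | hn
  · rw [Ioc_eq_empty_of_le hn, sum_empty]
    positivity
  calc ∑ d ∈ Ioc z n, 1 / (d : ℝ) ^ 3 ≤ ∑ d ∈ Ioc z n, 1 / (z : ℝ) * ((d : ℝ) ^ 2)⁻¹ :=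
        sum_le_sum fun d hd ↦ by
          have hzd : (z : ℝ) ≤ d := mod_cast (mem_Ioc.1 hd).1.le
          have hd₀ : (0 : ℝ) < d := hz₀.trans_le hzd
          rw [one_div_mul_eq_div, ← one_div, div_div, pow_succ]
          gcongr
    _ ≤ 1 / (z : ℝ) * ((z : ℝ)⁻¹ - (n : ℝ)⁻¹) := by
        rw [← mul_sum]
        gcongr
        exact sum_Ioc_inv_sq_le_sub hz.ne' hn.le
    _ ≤ 1 / (z : ℝ) * (z : ℝ)⁻¹ := by
        gcongr
        exact sub_le_self _ (by positivity)
    _ = 1 / (z : ℝ) ^ 2 := by field_simp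

lemma abs_moebius_div_cube_le (d : ℕ) :
    |(ArithmeticFunction.moebius d : ℝ) / (d : ℝ) ^ 3| ≤ 1 / (d : ℝ) ^ 3 := by
  rw [abs_div, abs_of_nonneg (by positivity : (0 : ℝ) ≤ (d : ℝ) ^ 3)]
  gcongr
  exact abs_moebius_cast_le_one d

lemma zeta3_mul_tsum_moebius :
    zeta3 * ∑' n : ℕ, (ArithmeticFunction.moebius n : ℝ) / (n : ℝ) ^ 3 = 1 := by
  have h3 : 1 < (3 : ℂ).re := by norm_num
  have hzeta : riemannZeta 3 = zeta3 := by
    rw [zeta_eq_tsum_one_div_nat_cpow h3, zeta3, Complex.ofReal_tsum]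
    exact tsum_congr fun n ↦ by push_cast; norm_cast
  have hmoebius : LSeries (fun n ↦ ((ArithmeticFunction.moebius n : ℤ) : ℂ)) 3 =
      (∑' n : ℕ, (ArithmeticFunction.moebius n : ℝ) / (n : ℝ) ^ 3 : ℝ) := by
    rw [LSeries, Complex.ofReal_tsum]
    refine tsum_congr fun n ↦ ?_
    rw [LSeries.term_of_ne_zero' three_ne_zero]
    push_cast
    norm_cast
  have h := ArithmeticFunction.LSeries_zeta_mul_Lseries_moebius h3
  rw [ArithmeticFunction.LSeries_zeta_eq_riemannZeta h3, hzeta, hmoebius] at h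
  exact_mod_cast h

lemma tendsto_cubeFreeDensity : Tendsto cubeFreeDensity atTop (nhds (1 / zeta3)) := by
  have hsum : Summable fun n : ℕ ↦ (ArithmeticFunction.moebius n : ℝ) / (n : ℝ) ^ 3 :=
    .of_norm_bounded (Real.summable_one_div_nat_pow.2 (by norm_num)) abs_moebius_div_cube_le
  rw [← eq_one_div_of_mul_eq_one_right zeta3_mul_tsum_moebius]
  refine (hsum.hasSum.tendsto_sum_nat.comp (tendsto_add_atTop_nat 1)).congr fun n ↦ ?_
  rw [Function.comp_apply, Nat.range_succ_eq_Icc_zero, ← add_sum_Ioc_eq_sum_Icc n.zero_le]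
  simp [cubeFreeDensity]

lemma abs_cubeFreeDensity_sub_le {z : ℕ} (hz : 0 < z) :
    |cubeFreeDensity z - 1 / zeta3| ≤ 1 / (z : ℝ) ^ 2 := by
  refine le_of_tendsto (tendsto_const_nhds.sub tendsto_cubeFreeDensity).abs ?_
  filter_upwards [eventually_ge_atTop z] with n hn
  rw [abs_sub_comm, cubeFreeDensity, cubeFreeDensity, ← sum_Ioc_consecutive _ z.zero_le hn,
    add_sub_cancel_left]
  calc _ ≤ ∑ d ∈ Ioc z n, 1 / (d : ℝ) ^ 3 :=
        (abs_sum_le_sum_abs _ _).trans (sum_le_sum fun d _ ↦ abs_moebius_div_cube_le d)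
    _ ≤ 1 / (z : ℝ) ^ 2 := sum_Ioc_inv_cube_le hz n

lemma abs_one_div_zeta3_le_two : |1 / zeta3| ≤ 2 := by
  have h := abs_cubeFreeDensity_sub_le one_pos
  have hone : cubeFreeDensity 1 = 1 := by
    simp [cubeFreeDensity, show Ioc 0 1 = {1} from rfl]
  rw [hone, Nat.cast_one, one_pow, div_one, abs_sub_comm] at h
  linarith [abs_sub_abs_le_abs_sub (1 / zeta3) 1, abs_one (α := ℝ)]

lemma dvd_floor_iff_fract_lt {D : ℕ} (hD : 0 < D) {t : ℝ} (ht : 0 ≤ t) :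
    D ∣ ⌊t⌋₊ ↔ Int.fract (t / D) < 1 / D := by
  have hD₀ : (0 : ℝ) < D := mod_cast hD
  have hfract : Int.fract (t / D) = (t - (D * (⌊t⌋₊ / D) : ℕ)) / D := by
    rw [← Int.self_sub_floor, ← natCast_floor_eq_intCast_floor (by positivity),
      Nat.floor_div_natCast]
    push_cast
    field_simp
  rw [hfract, div_lt_div_iff_of_pos_right hD₀, sub_lt_iff_lt_add', ← Nat.cast_add_one,
    ← Nat.floor_lt ht, Nat.lt_add_one_iff]
  exact ⟨fun h ↦ (Nat.mul_div_cancel' h).ge, fun h ↦ ⟨_, h.antisymm (Nat.mul_div_le _ _)⟩⟩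

end Sieve

section FloorPowers

variable {c : ℝ} {N z : ℕ}

lemma card_filter_multiples_eq_count (P : ℕ → Prop) [DecidablePred P] {E : ℕ} (hE : 0 < E)
    (M N : ℕ) : #{n ∈ Ioc M N | E ∣ n ∧ P n} =
      Nat.count (fun k ↦ P (E * (M / E + 1 + k))) (N / E - M / E) := by
  rw [Nat.count_eq_card_filter_range]
  refine (card_nbij (fun k ↦ E * (M / E + 1 + k)) ?_ ?_ ?_).symm
  · intro k hk
    obtain ⟨hk, hP⟩ := mem_filter.1 hk
    refine mem_filter.2 ⟨mem_Ioc.2 (?_ : _ < E * _ ∧ E * _ ≤ _), dvd_mul_right _ _, hP⟩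
    constructor
    · rw [mul_comm, ← Nat.div_lt_iff_lt_mul hE]
      lia
    · rw [mul_comm, ← Nat.le_div_iff_mul_le hE]
      have := mem_range.1 hk
      lia
  · intro k _ l _ hkl
    simpa [hE.ne'] using hkl
  · rintro n hn
    obtain ⟨hn, ⟨m, rfl⟩, hP⟩ := mem_filter.1 hn
    obtain ⟨hMm, hmN⟩ := mem_Ioc.1 hn
    rw [mul_comm, ← Nat.div_lt_iff_lt_mul hE] at hMm
    rw [mul_comm, ← Nat.le_div_iff_mul_le hE] at hmN
    obtain ⟨k, rfl⟩ := Nat.exists_eq_add_of_lt hMm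
    refine ⟨k, ?_, by ring⟩
    rw [add_right_comm] at hP
    exact mem_coe.2 (mem_filter.2 ⟨mem_range.2 (by lia), hP⟩)

/-- Admissible sieving levels `z` for the count of the integers up to `N`; `z` is also the factor
saved in the error term. On the integers `E * k ∈ (N / z, N]` with `E ≤ z ^ 3`, a tangent to
`k ↦ (E * k) ^ c` is used over blocks of length `z ^ 9`, which costs about
`z ^ 6 * (N / z) ^ (c - 2) * z ^ 27`; this is `O(1)` when `z ^ 34 ≤ N ^ (2 - c)`. -/
structure SieveLevel (c : ℝ) (N z : ℕ) : Prop where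
  one_lt : 1 < c
  lt_two : c < 2
  pos : 0 < z
  pow_le : (z : ℝ) ^ 34 ≤ (N : ℝ) ^ (2 - c)

namespace SieveLevel

lemma one_le_cast (h : SieveLevel c N z) : (1 : ℝ) ≤ z := mod_cast h.pos

lemma cast_pos (h : SieveLevel c N z) : (0 : ℝ) < N := by
  refine N.cast_nonneg.lt_of_ne' fun hN ↦ ?_
  have := h.pow_le
  rw [hN, Real.zero_rpow (by linarith [h.lt_two])] at this
  linarith [one_le_pow₀ h.one_le_cast (n := 34)]

lemma one_le_self (h : SieveLevel c N z) : (1 : ℝ) ≤ N :=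
  Nat.one_le_cast.2 (Nat.cast_pos.1 h.cast_pos)

lemma rpow_two_sub_le (h : SieveLevel c N z) : (N : ℝ) ^ (2 - c) ≤ N :=
  (Real.rpow_le_rpow_of_exponent_le h.one_le_self (by linarith [h.one_lt])).trans_eq
    (Real.rpow_one _)

lemma pow_le_self (h : SieveLevel c N z) : (z : ℝ) ^ 34 ≤ N := h.pow_le.trans h.rpow_two_sub_le

lemma pow_le_self_of_le (h : SieveLevel c N z) {k : ℕ} (hk : k ≤ 34) : (z : ℝ) ^ k ≤ N :=
  (pow_le_pow_right₀ h.one_le_cast hk).trans h.pow_le_self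

lemma rpow_sub_two_le (h : SieveLevel c N z) : (N : ℝ) ^ (c - 2) ≤ 1 / (z : ℝ) ^ 34 := by
  rw [← neg_sub, Real.rpow_neg N.cast_nonneg, ← one_div]
  have := h.one_le_cast
  exact one_div_le_one_div_of_le (by positivity) h.pow_le

lemma div_rpow_sub_two_le (h : SieveLevel c N z) :
    ((N : ℝ) / z) ^ (c - 2) ≤ 1 / (z : ℝ) ^ 33 := by
  have hz := h.one_le_cast
  calc ((N : ℝ) / z) ^ (c - 2) = (N : ℝ) ^ (c - 2) * (z : ℝ) ^ (2 - c) := by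
        rw [Real.div_rpow N.cast_nonneg z.cast_nonneg, div_eq_mul_inv,
          ← Real.rpow_neg z.cast_nonneg, neg_sub]
    _ ≤ 1 / (z : ℝ) ^ 34 * (z : ℝ) ^ (1 : ℝ) := by
        gcongr
        · exact h.rpow_sub_two_le
        · linarith [h.one_lt]
    _ = 1 / (z : ℝ) ^ 33 := by
        rw [Real.rpow_one]
        field_simp

lemma le_div_of_cube_le (h : SieveLevel c N z) {d : ℕ} (hd : (d : ℝ) ^ 3 ≤ (N : ℝ) ^ 2) :
    d ≤ N / z := by
  rw [Nat.le_div_iff_mul_le h.pos]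
  refine Nat.cast_le (α := ℝ).1 (le_of_pow_le_pow_left₀ three_ne_zero N.cast_nonneg ?_)
  calc ((d * z : ℕ) : ℝ) ^ 3 = (d : ℝ) ^ 3 * (z : ℝ) ^ 3 := by push_cast; ring
    _ ≤ (N : ℝ) ^ 2 * N := by gcongr; exact h.pow_le_self_of_le (by norm_num)
    _ = (N : ℝ) ^ 3 := by ring

end SieveLevel

/-- The values `n ^ c / D` at the successive multiples `n` of `E` beyond `M`. -/
noncomputable def scaledPower (c : ℝ) (E D M k : ℕ) : ℝ := ((E * (M / E + 1 + k) : ℕ) : ℝ) ^ c / D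

/-- The derivative of `scaledPower c E D M` with respect to `k`. -/
noncomputable def scaledPowerSlope (c : ℝ) (E D M k : ℕ) : ℝ :=
  E * (c * ((E * (M / E + 1 + k) : ℕ) : ℝ) ^ (c - 1)) / D

lemma card_dvd_floor_rpow_eq_count (c : ℝ) {E D : ℕ} (hE : 0 < E) (hD : 0 < D) (M N : ℕ) :
    #{n ∈ Ioc M N | E ∣ n ∧ D ∣ ⌊(n : ℝ) ^ c⌋₊} =
      Nat.count (fun k ↦ Int.fract (scaledPower c E D M k) < 1 / D) (N / E - M / E) := by
  rw [card_filter_multiples_eq_count (fun n ↦ D ∣ ⌊(n : ℝ) ^ c⌋₊) hE]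
  simp only [dvd_floor_iff_fract_lt hD (Real.rpow_nonneg (Nat.cast_nonneg _) c), scaledPower]
  congr!

lemma multiple_mem_Icc (hz : 0 < z) {E k : ℕ} (hE : 0 < E) (hk : k < N / E - N / z / E) :
    ((E * (N / z / E + 1 + k) : ℕ) : ℝ) ∈ Set.Icc ((N : ℝ) / z) N := by
  constructor
  · rw [div_le_iff₀ (mod_cast hz)]
    have hlt : N / z < E * (N / z / E + 1 + k) := by
      rw [mul_comm, ← Nat.div_lt_iff_lt_mul hE]
      lia
    rw [Nat.div_lt_iff_lt_mul hz] at hlt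
    exact mod_cast hlt.le
  · rw [Nat.cast_le, mul_comm, ← Nat.le_div_iff_mul_le hE]
    lia

lemma SieveLevel.quadraticBounds_scaledPower (h : SieveLevel c N z) {E : ℕ} (hE : 0 < E) (D : ℕ) :
    QuadraticBounds (scaledPower c E D (N / z)) (scaledPowerSlope c E D (N / z))
      (N / E - N / z / E) ((E : ℝ) ^ 2 * (c * (c - 1) * (N : ℝ) ^ (c - 2)) / D)
      ((E : ℝ) ^ 2 * (2 / (z : ℝ) ^ 33) / D) := by
  have hz := h.one_le_cast
  have hmem {k : ℕ} (hk : k < N / E - N / z / E) :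
      ((E * (N / z / E + 1) : ℕ) : ℝ) + E * k ∈ Set.Icc ((N : ℝ) / z) N := by
    convert multiple_mem_Icc h.pos hE hk using 1
    push_cast
    ring
  have hbounds := quadraticBounds_rpow h.one_lt.le h.lt_two.le (div_pos h.cast_pos (by linarith))
    D.cast_nonneg fun k hk ↦ hmem hk
  have hcurv : c * (c - 1) * ((N : ℝ) / z) ^ (c - 2) ≤ 2 / (z : ℝ) ^ 33 := by
    calc c * (c - 1) * ((N : ℝ) / z) ^ (c - 2) ≤ 2 * (1 / (z : ℝ) ^ 33) := by
          gcongr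
          · nlinarith [h.one_lt, h.lt_two]
          · exact h.div_rpow_sub_two_le
      _ = 2 / (z : ℝ) ^ 33 := by ring
  convert hbounds.mono_right (l₁' := (E : ℝ) ^ 2 * (2 / (z : ℝ) ^ 33) / D) (by gcongr) using 1
  all_goals
    funext k
    simp only [scaledPower, scaledPowerSlope]
    push_cast
    ring_nf

lemma SieveLevel.scaledPowerSlope_mem (h : SieveLevel c N z) {E k : ℕ} (hE : 0 < E) (D : ℕ)
    (hk : k < N / E - N / z / E) :
    0 ≤ scaledPowerSlope c E D (N / z) k ∧
      scaledPowerSlope c E D (N / z) k ≤ E * (c * (N : ℝ) ^ (c - 1)) / D := by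
  have hc := h.one_lt
  unfold scaledPowerSlope
  refine ⟨by positivity, ?_⟩
  have := (multiple_mem_Icc h.pos hE hk).2
  gcongr

end FloorPowers

section SmallModuli

variable {c : ℝ} {N z : ℕ}

lemma abs_div_sub_div_sub_le {M N : ℕ} (hMN : M ≤ N) (E : ℕ) :
    |((N / E - M / E : ℕ) : ℝ) - ((N : ℝ) - M) / E| ≤ 1 := by
  have hfloor (n : ℕ) : ((n / E : ℕ) : ℝ) ≤ n / E ∧ (n : ℝ) / E < (n / E : ℕ) + 1 :=
    ⟨Nat.cast_div_le, by simpa only [Nat.floor_div_eq_div] using Nat.lt_floor_add_one ((n : ℝ) / E)⟩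
  obtain ⟨hN₁, hN₂⟩ := hfloor N
  obtain ⟨hM₁, hM₂⟩ := hfloor M
  rw [Nat.cast_sub (Nat.div_le_div_right hMN), sub_div, abs_le]
  constructor <;> linarith

namespace SieveLevel

lemma rpow_sub_one_eq (h : SieveLevel c N z) : (N : ℝ) ^ (c - 1) = N ^ (c - 2) * N := by
  rw [← Real.rpow_add_one h.cast_pos.ne']
  ring_nf

lemma slope_div_curvature_eq (h : SieveLevel c N z) {E D : ℕ} (hE : 0 < E) (hD : 0 < D) :
    E * (c * (N : ℝ) ^ (c - 1)) / D / ((E : ℝ) ^ 2 * (c * (c - 1) * (N : ℝ) ^ (c - 2)) / D) =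
      N / (E * (c - 1)) := by
  have hN := h.cast_pos
  have hc := h.one_lt
  have hc₁ : 0 < c - 1 := by linarith
  rw [h.rpow_sub_one_eq]
  field_simp

lemma slope_le (h : SieveLevel c N z) {E D : ℕ} (hE : E ≤ z ^ 3) (hD : 0 < D) :
    E * (c * (N : ℝ) ^ (c - 1)) / D ≤ 2 * N / (z : ℝ) ^ 31 := by
  have hE₀ : (E : ℝ) ≤ (z : ℝ) ^ 3 := mod_cast hE
  calc E * (c * (N : ℝ) ^ (c - 1)) / D ≤ E * (c * (N : ℝ) ^ (c - 1)) :=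
        div_le_self (by have := h.one_lt; positivity) (mod_cast hD)
    _ ≤ (z : ℝ) ^ 3 * (2 * (1 / (z : ℝ) ^ 34 * N)) := by
        rw [h.rpow_sub_one_eq]
        gcongr
        · have := h.one_lt
          positivity
        · exact h.lt_two.le
        · exact h.rpow_sub_two_le
    _ = 2 * N / (z : ℝ) ^ 31 := by field_simp

lemma one_div_curvature_le (h : SieveLevel c N z) {E D : ℕ} (hE : 0 < E) (hD : 0 < D)
    (hDz : D ≤ z ^ 3) :
    1 / ((E : ℝ) ^ 2 * (c * (c - 1) * (N : ℝ) ^ (c - 2)) / D) ≤ (z : ℝ) ^ 3 * N / (c - 1) := by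
  have hc₁ : 0 < c - 1 := by linarith [h.one_lt]
  have hE₁ : (1 : ℝ) ≤ E := mod_cast hE
  have hpow : (N : ℝ) ^ (c - 2) = ((N : ℝ) ^ (2 - c))⁻¹ := by
    rw [← Real.rpow_neg N.cast_nonneg, neg_sub]
  have hN := Real.rpow_pos_of_pos h.cast_pos (2 - c)
  calc 1 / ((E : ℝ) ^ 2 * (c * (c - 1) * (N : ℝ) ^ (c - 2)) / D)
      = D * (N : ℝ) ^ (2 - c) / ((E ^ 2 * c) * (c - 1)) := by
        rw [hpow]
        field_simp
    _ ≤ (z : ℝ) ^ 3 * N / (1 * (c - 1)) := by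
        gcongr
        · exact mod_cast hDz
        · exact h.rpow_two_sub_le
        · nlinarith [one_le_pow₀ hE₁ (n := 2), h.one_lt]
    _ = _ := by rw [one_mul]

lemma equidistribution_error_le (h : SieveLevel c N z) {F l n : ℝ} (hl : 0 < l) (hn : n ≤ N)
    (hF : F ≤ 2 * N / (z : ℝ) ^ 31) (hFl : F / l ≤ N / (c - 1))
    (hl' : 1 / l ≤ (z : ℝ) ^ 3 * N / (c - 1)) :
    11 * (n / (z : ℝ) ^ 3) + (z : ℝ) ^ 3 * (z ^ 3 * F + 2) * (1 + 2 / (z ^ 9 * l)) + z ^ 9 ≤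
      (16 + 6 / (c - 1)) * (N / (z : ℝ) ^ 3) := by
  have hz := h.one_le_cast
  have hN := h.cast_pos
  have hpow {k : ℕ} (hk : k ≤ 31) : (z : ℝ) ^ k ≤ N / (z : ℝ) ^ 3 := by
    rw [le_div_iff₀ (by positivity), ← pow_add]
    exact h.pow_le_self_of_le (by lia)
  have hF' : (z : ℝ) ^ 6 * F ≤ 2 * (N / (z : ℝ) ^ 3) := by
    calc (z : ℝ) ^ 6 * F ≤ z ^ 6 * (2 * N / (z : ℝ) ^ 31) := by gcongr
      _ = 2 * (N / (z : ℝ) ^ 25) := by field_simp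
      _ ≤ 2 * (N / (z : ℝ) ^ 3) := by gcongr; norm_num
  have hl'' : 4 / (z : ℝ) ^ 6 * (1 / l) ≤ 4 / (c - 1) * (N / (z : ℝ) ^ 3) := by
    calc 4 / (z : ℝ) ^ 6 * (1 / l) ≤ 4 / (z : ℝ) ^ 6 * ((z : ℝ) ^ 3 * N / (c - 1)) := by gcongr
      _ = 4 / (c - 1) * (N / (z : ℝ) ^ 3) := by field_simp
  calc _ = 11 * (n / (z : ℝ) ^ 3) + (z ^ 6 * F + 2 * z ^ 3) + 2 / z ^ 3 * (F / l) +
        4 / (z : ℝ) ^ 6 * (1 / l) + z ^ 9 := by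
        field_simp
        ring
    _ ≤ 11 * (N / (z : ℝ) ^ 3) + (2 * (N / (z : ℝ) ^ 3) + 2 * (N / (z : ℝ) ^ 3)) +
        2 / z ^ 3 * (N / (c - 1)) + 4 / (c - 1) * (N / (z : ℝ) ^ 3) + N / (z : ℝ) ^ 3 := by
        gcongr
        · exact hpow (by norm_num)
        · exact hpow (by norm_num)
    _ = (16 + 6 / (c - 1)) * (N / (z : ℝ) ^ 3) := by
        field_simp
        ring

theorem abs_card_dvd_floor_rpow_sub_le (h : SieveLevel c N z) {E D : ℕ} (hE : 0 < E) (hD : 0 < D)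
    (hEz : E ≤ z ^ 3) (hDz : D ≤ z ^ 3) :
    |(#{n ∈ Ioc (N / z) N | E ∣ n ∧ D ∣ ⌊(n : ℝ) ^ c⌋₊} : ℝ) - ((N : ℝ) - (N / z : ℕ)) / E / D| ≤
      (17 + 6 / (c - 1)) * (N / (z : ℝ) ^ 3) := by
  have hz := h.one_le_cast
  have hN := h.cast_pos
  have hc := h.one_lt
  have hc₁ : 0 < c - 1 := by linarith
  have hD₁ : (1 : ℝ) ≤ D := mod_cast hD
  have hE₁ : (1 : ℝ) ≤ E := mod_cast hE
  set n := N / E - N / z / E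
  set l : ℝ := (E : ℝ) ^ 2 * (c * (c - 1) * (N : ℝ) ^ (c - 2)) / D
  have hl : 0 < l := by positivity
  have hE₂ : (E : ℝ) ≤ (z : ℝ) ^ 3 := mod_cast hEz
  have hlH : (E : ℝ) ^ 2 * (2 / (z : ℝ) ^ 33) / D * ((z ^ 9 : ℕ) : ℝ) ^ 3 ≤ 2 := by
    calc _ ≤ ((z : ℝ) ^ 3) ^ 2 * (2 / (z : ℝ) ^ 33) / 1 * ((z ^ 9 : ℕ) : ℝ) ^ 3 := by gcongr
      _ = 2 := by push_cast; field_simp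
  have hcount := (h.quadraticBounds_scaledPower hE D).abs_count_fract_lt_sub_le hl
    (by positivity) (fun k hk ↦ h.scaledPowerSlope_mem hE D hk) (by positivity)
    (div_le_one_of_le₀ hD₁ (by positivity)) (pow_pos h.pos 9) hlH (pow_pos h.pos 3)
  rw [← card_dvd_floor_rpow_eq_count c hE hD] at hcount
  push_cast at hcount
  have herror := h.equidistribution_error_le hl (n := n)
    (mod_cast (Nat.sub_le _ _).trans (Nat.div_le_self _ _)) (h.slope_le hEz hD)
    ((h.slope_div_curvature_eq hE hD).trans_le
      (by gcongr; exact le_mul_of_one_le_left hc₁.le hE₁))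
    (h.one_div_curvature_le hE hD hDz)
  have hmain : |(n : ℝ) * (1 / D) - ((N : ℝ) - (N / z : ℕ)) / E / D| ≤ N / (z : ℝ) ^ 3 := by
    rw [mul_one_div, ← sub_div, abs_div, Nat.abs_cast]
    refine (div_le_self (abs_nonneg _) hD₁).trans <|
      (abs_div_sub_div_sub_le (Nat.div_le_self N z) E).trans ?_
    rw [one_le_div (by positivity)]
    exact h.pow_le_self_of_le (by norm_num)
  refine (abs_sub_le _ ((n : ℝ) * (1 / D)) _).trans ?_
  linarith

end SieveLevel

end SmallModuli

section LargeModuli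

variable {c : ℝ} {N z : ℕ}

lemma exists_scale_le {d Z : ℝ} (hd : 0 < d) (hZ : 1 ≤ Z) :
    ∃ L, 0 < L ∧ 2 * (1 / d ^ 3) * L ≤ 1 ∧ 2 / Z ^ 33 / d ^ 3 * L ^ 3 ≤ 1 ∧
      1 / L ≤ 2 / d ^ 3 + 2 / (d * Z ^ 2) := by
  have hmin : 0 < min (d ^ 3 / 2) (d * Z ^ 2 / 2) := by positivity
  refine ⟨min (d ^ 3 / 2) (d * Z ^ 2 / 2), hmin, ?_, ?_, ?_⟩
  · calc _ ≤ 2 * (1 / d ^ 3) * (d ^ 3 / 2) := by gcongr; exact min_le_left _ _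
      _ = 1 := by field_simp
  · calc _ ≤ 2 / Z ^ 33 / d ^ 3 * (d * Z ^ 2 / 2) ^ 3 := by gcongr; exact min_le_right _ _
      _ = 1 / 4 * (1 / Z ^ 27) := by field_simp; norm_num
      _ ≤ 1 / 4 * 1 := by gcongr; exact div_le_one_of_le₀ (one_le_pow₀ hZ) (by positivity)
      _ ≤ 1 := by norm_num
  · have hleft : 0 < 2 / d ^ 3 := by positivity
    have hright : 0 < 2 / (d * Z ^ 2) := by positivity
    rcases min_choice (d ^ 3 / 2) (d * Z ^ 2 / 2) with h | h <;> rw [h, one_div_div] <;> linarith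

namespace SieveLevel

lemma one_div_lt_scaledPowerSlope (hc : 1 < c) {D : ℕ} (hD : 0 < D) (M k : ℕ) :
    1 / (D : ℝ) < scaledPowerSlope c 1 D M k := by
  have hbase : (1 : ℝ) ≤ ((1 * (M / 1 + 1 + k) : ℕ) : ℝ) := by
    rw [Nat.one_le_cast]
    lia
  have hpow := Real.one_le_rpow hbase (by linarith : 0 ≤ c - 1)
  rw [scaledPowerSlope, Nat.cast_one, one_mul]
  gcongr
  nlinarith

lemma card_cube_dvd_floor_rpow_le (h : SieveLevel c N z) {d : ℕ} (hd : 0 < d) :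
    (#((Ioc (N / z) N).filter fun n : ℕ ↦ d ^ 3 ∣ ⌊(n : ℝ) ^ c⌋₊) : ℝ) ≤
      2 + 8 * N / (z : ℝ) ^ 2 * (1 / d) +
        8 * N * (1 + (1 + Real.log N) / (c - 1)) * (1 / d ^ 3) := by
  have hN := h.cast_pos
  have hc := h.one_lt
  have hd₀ : (0 : ℝ) < d := mod_cast hd
  have hD : 0 < d ^ 3 := pow_pos hd 3
  obtain ⟨L, hL, hδL, hlL, hLd⟩ := exists_scale_le hd₀ h.one_le_cast
  have hcurv := h.slope_div_curvature_eq one_pos hD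
  set n := N / 1 - N / z / 1
  set F : ℝ := (1 : ℕ) * (c * (N : ℝ) ^ (c - 1)) / (d ^ 3 : ℕ)
  set l : ℝ := ((1 : ℕ) : ℝ) ^ 2 * (c * (c - 1) * (N : ℝ) ^ (c - 2)) / (d ^ 3 : ℕ)
  have hn : (n : ℝ) ≤ N := mod_cast (Nat.sub_le _ _).trans (Nat.div_le_self _ _)
  have hlog : Real.log n ≤ Real.log N := by
    rcases n.eq_zero_or_pos with h₀ | h₀
    · rw [h₀, Nat.cast_zero, Real.log_zero]
      exact Real.log_natCast_nonneg N
    · exact Real.log_le_log (mod_cast h₀) hn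
  have hcount := (h.quadraticBounds_scaledPower one_pos (d ^ 3)).count_fract_lt_le
    (F := F) (δ := 1 / (d ^ 3 : ℕ)) (by positivity) (by positivity)
    (fun k hk ↦ ⟨one_div_lt_scaledPowerSlope hc hD _ k, (h.scaledPowerSlope_mem one_pos _ hk).2⟩)
    (by positivity) hL (by simpa using hδL) (by simpa using hlL)
  rw [← card_dvd_floor_rpow_eq_count c one_pos hD] at hcount
  simp only [one_dvd, true_and] at hcount
  calc _ ≤ 2 * (1 + n / (L / 2)) + 8 * F * (1 / (d ^ 3 : ℕ)) / l * (1 + Real.log n) := hcount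
    _ = 2 + 4 * n * (1 / L) + 8 * (F / l) * (1 / d ^ 3) * (1 + Real.log n) := by
        push_cast
        ring
    _ ≤ 2 + 4 * N * (2 / d ^ 3 + 2 / (d * (z : ℝ) ^ 2)) +
        8 * (N / (c - 1)) * (1 / d ^ 3) * (1 + Real.log N) := by
        rw [hcurv, Nat.cast_one, one_mul]
        gcongr
    _ = _ := by ring

theorem sum_card_cube_dvd_floor_rpow_le (h : SieveLevel c N z) {B : ℝ}
    (hB : 1 + Real.log N ≤ B * z) :
    ∑ d ∈ Ioc z (N / z),
        (#((Ioc (N / z) N).filter fun n : ℕ ↦ d ^ 3 ∣ ⌊(n : ℝ) ^ c⌋₊) : ℝ) ≤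
      (10 + 8 * B + 8 * B / (c - 1)) * (N / z) := by
  have hN := h.cast_pos
  have hz := h.one_le_cast
  have hc₁ : 0 < c - 1 := by linarith [h.one_lt]
  have hlog := Real.log_natCast_nonneg N
  have hcard : ∑ _d ∈ Ioc z (N / z), (2 : ℝ) ≤ 2 * (N / z) := by
    rw [sum_const, Nat.card_Ioc, nsmul_eq_mul, mul_comm]
    gcongr
    exact (Nat.cast_le.2 (Nat.sub_le _ _)).trans Nat.cast_div_le
  have hharmonic : ∑ d ∈ Ioc z (N / z), 1 / (d : ℝ) ≤ B * z := by
    calc ∑ d ∈ Ioc z (N / z), 1 / (d : ℝ) ≤ ∑ d ∈ Icc 1 N, 1 / (d : ℝ) := by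
          refine sum_le_sum_of_subset_of_nonneg (fun d hd ↦ ?_) fun d _ _ ↦ by positivity
          rw [mem_Ioc] at hd
          exact mem_Icc.2 ⟨by lia, hd.2.trans (Nat.div_le_self _ _)⟩
      _ = (harmonic N : ℝ) := by
          rw [harmonic_eq_sum_Icc]
          push_cast
          simp only [one_div]
      _ ≤ B * z := (harmonic_le_one_add_log N).trans hB
  calc _ ≤ ∑ d ∈ Ioc z (N / z), (2 + 8 * N / (z : ℝ) ^ 2 * (1 / d) +
        8 * N * (1 + (1 + Real.log N) / (c - 1)) * (1 / (d : ℝ) ^ 3)) :=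
        sum_le_sum fun d hd ↦ h.card_cube_dvd_floor_rpow_le (by rw [mem_Ioc] at hd; lia)
    _ = ∑ _d ∈ Ioc z (N / z), (2 : ℝ) + 8 * N / (z : ℝ) ^ 2 * ∑ d ∈ Ioc z (N / z), 1 / (d : ℝ) +
        8 * N * (1 + (1 + Real.log N) / (c - 1)) * ∑ d ∈ Ioc z (N / z), 1 / (d : ℝ) ^ 3 := by
        rw [sum_add_distrib, sum_add_distrib, ← mul_sum, ← mul_sum]
    _ ≤ 2 * (N / z) + 8 * N / (z : ℝ) ^ 2 * (B * z) +
        8 * N * (z + B * z / (c - 1)) * (1 / (z : ℝ) ^ 2) := by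
        have hBz : 0 ≤ B * z := by linarith
        gcongr
        exact sum_Ioc_inv_cube_le h.pos _
    _ = _ := by
        field_simp
        ring

end SieveLevel

end LargeModuli

section CubeFreeCount

lemma sum_abs_cubeFreeIndicator_sub_cubeSieve_le (s : Finset ℕ) (F : ℕ → ℕ) {B : ℕ}
    (hF : ∀ n ∈ s, F n ≠ 0) (hB : ∀ n ∈ s, ∀ d, d ^ 3 ∣ F n → d ≤ B) (z : ℕ) :
    ∑ n ∈ s, |cubeFreeIndicator (F n) - cubeSieve z (F n)| ≤
      ∑ d ∈ Ioc z B, (#{n ∈ s | d ^ 3 ∣ F n} : ℝ) := by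
  calc _ ≤ ∑ n ∈ s, (#{d ∈ Ioc z B | d ^ 3 ∣ F n} : ℝ) :=
        sum_le_sum fun n hn ↦ abs_cubeFreeIndicator_sub_cubeSieve_le (hF n hn) (hB n hn) z
    _ = ∑ d ∈ Ioc z B, (#{n ∈ s | d ^ 3 ∣ F n} : ℝ) := by
        exact_mod_cast sum_card_bipartiteAbove_eq_sum_card_bipartiteBelow fun n d ↦ d ^ 3 ∣ F n

lemma sum_cubeSieve_mul_cubeSieve (s : Finset ℕ) (F : ℕ → ℕ) (z : ℕ) :
    ∑ n ∈ s, cubeSieve z n * cubeSieve z (F n) =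
      ∑ e ∈ Ioc 0 z, ∑ d ∈ Ioc 0 z,
        (ArithmeticFunction.moebius e : ℝ) * ArithmeticFunction.moebius d *
          #{n ∈ s | e ^ 3 ∣ n ∧ d ^ 3 ∣ F n} := by
  simp only [cubeSieve, sum_filter, sum_mul_sum]
  rw [sum_comm]
  refine sum_congr rfl fun e _ ↦ ?_
  rw [sum_comm]
  refine sum_congr rfl fun d _ ↦ ?_
  rw [card_filter, Nat.cast_sum, mul_sum]
  refine sum_congr rfl fun n _ ↦ ?_
  rw [ite_zero_mul_ite_zero, Nat.cast_ite, Nat.cast_one, Nat.cast_zero, mul_ite, mul_one, mul_zero]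

lemma card_filter_cubeFree_eq_sum (s : Finset ℕ) (F : ℕ → ℕ) :
    (#{n ∈ s | CubeFree n ∧ CubeFree (F n)} : ℝ) =
      ∑ n ∈ s, cubeFreeIndicator n * cubeFreeIndicator (F n) := by
  simp only [cubeFreeIndicator, card_filter, Nat.cast_sum, Nat.cast_ite, ite_zero_mul_ite_zero,
    Nat.cast_one, Nat.cast_zero, mul_one]

lemma abs_sum_cubeFreeIndicator_mul_sub_le (s : Finset ℕ) (F : ℕ → ℕ) (z : ℕ) :
    |∑ n ∈ s, cubeFreeIndicator n * cubeFreeIndicator (F n) -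
        ∑ n ∈ s, cubeSieve z n * cubeSieve z (F n)| ≤
      ∑ n ∈ s, |cubeFreeIndicator (F n) - cubeSieve z (F n)| +
        z * ∑ n ∈ s, |cubeFreeIndicator n - cubeSieve z n| := by
  rw [← sum_sub_distrib, mul_sum, ← sum_add_distrib]
  refine (abs_sum_le_sum_abs _ _).trans (sum_le_sum fun n _ ↦ ?_)
  calc _ = |cubeFreeIndicator n * (cubeFreeIndicator (F n) - cubeSieve z (F n)) +
        cubeSieve z (F n) * (cubeFreeIndicator n - cubeSieve z n)| := by ring_nf
    _ ≤ |cubeFreeIndicator n| * |cubeFreeIndicator (F n) - cubeSieve z (F n)| +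
        |cubeSieve z (F n)| * |cubeFreeIndicator n - cubeSieve z n| := by
        rw [← abs_mul, ← abs_mul]
        exact abs_add_le _ _
    _ ≤ 1 * |cubeFreeIndicator (F n) - cubeSieve z (F n)| +
        z * |cubeFreeIndicator n - cubeSieve z n| := by
        gcongr
        · exact abs_cubeFreeIndicator_le_one n
        · exact abs_cubeSieve_le z (F n)
    _ = _ := by rw [one_mul]

lemma sum_card_cube_dvd_le {z : ℕ} (hz : 0 < z) (M N B : ℕ) :
    ∑ d ∈ Ioc z B, (#{n ∈ Ioc M N | d ^ 3 ∣ n} : ℝ) ≤ N / (z : ℝ) ^ 2 := by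
  calc _ ≤ ∑ d ∈ Ioc z B, (N : ℝ) * (1 / (d : ℝ) ^ 3) := by
        refine sum_le_sum fun d _ ↦ ?_
        calc (#{n ∈ Ioc M N | d ^ 3 ∣ n} : ℝ) ≤ #{n ∈ Ioc 0 N | d ^ 3 ∣ n} := by
              gcongr
              exact M.zero_le
          _ = (N / d ^ 3 : ℕ) := by rw [Nat.Ioc_filter_dvd_card_eq_div]
          _ ≤ N * (1 / (d : ℝ) ^ 3) := by
              rw [mul_one_div]
              exact_mod_cast Nat.cast_div_le
    _ ≤ N * (1 / (z : ℝ) ^ 2) := by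
        rw [← mul_sum]
        gcongr
        exact sum_Ioc_inv_cube_le hz B
    _ = N / (z : ℝ) ^ 2 := mul_one_div _ _

lemma abs_mul_cubeFreeDensity_sq_sub_le {z : ℕ} (hz : 0 < z) {x y : ℝ} (hy : 0 ≤ y)
    (hyx : y ≤ x / z) :
    |(x - y) * cubeFreeDensity z ^ 2 - x / zeta3 ^ 2| ≤ 14 * (x / z) := by
  have hz₁ : (1 : ℝ) ≤ z := mod_cast hz
  have hx : 0 ≤ x / z := hy.trans hyx
  have hx₀ : 0 ≤ x := by
    rwa [le_div_iff₀ (by linarith), zero_mul] at hx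
  have hclose := abs_cubeFreeDensity_sub_le hz
  have hlimit := abs_one_div_zeta3_le_two
  have hdensity : |cubeFreeDensity z| ≤ 3 := by
    have : 1 / (z : ℝ) ^ 2 ≤ 1 := div_le_one_of_le₀ (one_le_pow₀ hz₁) (by positivity)
    linarith [abs_sub_abs_le_abs_sub (cubeFreeDensity z) (1 / zeta3)]
  calc _ = |x * ((cubeFreeDensity z - 1 / zeta3) * (cubeFreeDensity z + 1 / zeta3)) -
        y * cubeFreeDensity z ^ 2| := by ring_nf
    _ ≤ |x * ((cubeFreeDensity z - 1 / zeta3) * (cubeFreeDensity z + 1 / zeta3))| +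
        |y * cubeFreeDensity z ^ 2| := abs_sub _ _
    _ = x * (|cubeFreeDensity z - 1 / zeta3| * |cubeFreeDensity z + 1 / zeta3|) +
        y * |cubeFreeDensity z| ^ 2 := by
        rw [abs_mul, abs_mul, abs_mul, abs_pow, abs_of_nonneg hx₀, abs_of_nonneg hy]
    _ ≤ x * (1 / z * 5) + x / z * 3 ^ 2 := by
        gcongr
        · refine hclose.trans (one_div_le_one_div_of_le (by linarith) ?_)
          exact le_self_pow₀ hz₁ two_ne_zero
        · linarith [abs_add_le (cubeFreeDensity z) (1 / zeta3)]
    _ = 14 * (x / z) := by ring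

namespace SieveLevel

variable {c : ℝ} {N z : ℕ}

lemma le_div_of_cube_dvd_floor_rpow (h : SieveLevel c N z) {n d : ℕ} (hn : n ∈ Ioc (N / z) N)
    (hd : d ^ 3 ∣ ⌊(n : ℝ) ^ c⌋₊) : d ≤ N / z := by
  obtain ⟨hn, hnN⟩ := mem_Ioc.1 hn
  have hn₁ : (1 : ℝ) ≤ n := mod_cast (Nat.zero_le _).trans_lt hn
  have hfloor : 0 < ⌊(n : ℝ) ^ c⌋₊ :=
    Nat.floor_pos.2 (Real.one_le_rpow hn₁ (by linarith [h.one_lt]))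
  refine h.le_div_of_cube_le ?_
  calc (d : ℝ) ^ 3 ≤ ⌊(n : ℝ) ^ c⌋₊ := mod_cast Nat.le_of_dvd hfloor hd
    _ ≤ (n : ℝ) ^ c := Nat.floor_le (by positivity)
    _ ≤ (n : ℝ) ^ (2 : ℝ) := Real.rpow_le_rpow_of_exponent_le hn₁ h.lt_two.le
    _ ≤ (N : ℝ) ^ 2 := by
        rw [Real.rpow_two]
        gcongr

lemma le_div_of_cube_dvd (h : SieveLevel c N z) {n d : ℕ} (hn : n ∈ Ioc (N / z) N)
    (hd : d ^ 3 ∣ n) : d ≤ N / z := by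
  obtain ⟨hn, hnN⟩ := mem_Ioc.1 hn
  refine h.le_div_of_cube_le ?_
  calc (d : ℝ) ^ 3 ≤ N := mod_cast (Nat.le_of_dvd (by lia) hd).trans hnN
    _ ≤ (N : ℝ) ^ 2 := le_self_pow₀ h.one_le_self two_ne_zero

lemma abs_sum_cubeFreeIndicator_sub_sum_cubeSieve_le (h : SieveLevel c N z) {B : ℝ}
    (hB : 1 + Real.log N ≤ B * z) :
    |∑ n ∈ Ioc (N / z) N, cubeFreeIndicator n * cubeFreeIndicator ⌊(n : ℝ) ^ c⌋₊ -
        ∑ n ∈ Ioc (N / z) N, cubeSieve z n * cubeSieve z ⌊(n : ℝ) ^ c⌋₊| ≤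
      (11 + 8 * B + 8 * B / (c - 1)) * (N / z) := by
  have hz := h.one_le_cast
  have hne : ∀ n ∈ Ioc (N / z) N, n ≠ 0 := fun n hn ↦ by
    rw [mem_Ioc] at hn
    lia
  have hfloor : ∀ n ∈ Ioc (N / z) N, ⌊(n : ℝ) ^ c⌋₊ ≠ 0 := fun n hn ↦
    (Nat.floor_pos.2 (Real.one_le_rpow (mod_cast Nat.pos_of_ne_zero (hne n hn))
      (by linarith [h.one_lt]))).ne'
  have hpowers := (sum_abs_cubeFreeIndicator_sub_cubeSieve_le _ (fun n ↦ ⌊(n : ℝ) ^ c⌋₊) hfloor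
    (fun n hn d ↦ h.le_div_of_cube_dvd_floor_rpow hn) z).trans
    (h.sum_card_cube_dvd_floor_rpow_le hB)
  have hintegers := (sum_abs_cubeFreeIndicator_sub_cubeSieve_le _ (fun n ↦ n) hne
    (fun n hn d ↦ h.le_div_of_cube_dvd hn) z).trans (sum_card_cube_dvd_le h.pos _ N _)
  calc _ ≤ _ := abs_sum_cubeFreeIndicator_mul_sub_le _ _ z
    _ ≤ (10 + 8 * B + 8 * B / (c - 1)) * (N / z) + z * (N / (z : ℝ) ^ 2) := by gcongr
    _ = _ := by
        field_simp
        ring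

lemma abs_sum_cubeSieve_sub_le (h : SieveLevel c N z) :
    |∑ n ∈ Ioc (N / z) N, cubeSieve z n * cubeSieve z ⌊(n : ℝ) ^ c⌋₊ -
        ((N : ℝ) - (N / z : ℕ)) * cubeFreeDensity z ^ 2| ≤
      (17 + 6 / (c - 1)) * (N / z) := by
  have hz := h.one_le_cast
  set Δ := (N : ℝ) - (N / z : ℕ)
  set C := (17 + 6 / (c - 1)) * (N / (z : ℝ) ^ 3)
  have hmain : Δ * cubeFreeDensity z ^ 2 = ∑ e ∈ Ioc 0 z, ∑ d ∈ Ioc 0 z,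
      (ArithmeticFunction.moebius e : ℝ) * ArithmeticFunction.moebius d *
        (Δ / (e ^ 3 : ℕ) / (d ^ 3 : ℕ)) := by
    rw [sq, cubeFreeDensity, sum_mul_sum, mul_sum]
    refine sum_congr rfl fun e _ ↦ ?_
    rw [mul_sum]
    refine sum_congr rfl fun d _ ↦ ?_
    push_cast
    ring
  have hcube {d : ℕ} (hd : d ∈ Ioc 0 z) : 0 < d ^ 3 ∧ d ^ 3 ≤ z ^ 3 := by
    obtain ⟨hd₀, hdz⟩ := mem_Ioc.1 hd
    exact ⟨pow_pos hd₀ 3, Nat.pow_le_pow_left hdz 3⟩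
  rw [sum_cubeSieve_mul_cubeSieve _ fun n : ℕ ↦ ⌊(n : ℝ) ^ c⌋₊, hmain]
  simp only [← sum_sub_distrib, ← mul_sub]
  calc _ ≤ ∑ _e ∈ Ioc 0 z, ∑ _d ∈ Ioc 0 z, C := by
        refine (abs_sum_le_sum_abs _ _).trans (sum_le_sum fun e he ↦ ?_)
        refine (abs_sum_le_sum_abs _ _).trans (sum_le_sum fun d hd ↦ ?_)
        rw [abs_mul, abs_mul]
        refine (mul_le_of_le_one_left (abs_nonneg _) ?_).trans
          (h.abs_card_dvd_floor_rpow_sub_le (hcube he).1 (hcube hd).1 (hcube he).2 (hcube hd).2)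
        exact mul_le_one₀ (abs_moebius_cast_le_one e) (abs_nonneg _) (abs_moebius_cast_le_one d)
    _ = (z : ℝ) * (z * C) := by simp only [sum_const, Nat.card_Ioc, tsub_zero, nsmul_eq_mul]
    _ = _ := by
        simp only [C]
        field_simp

theorem abs_card_cubeFree_floor_rpow_sub_le (h : SieveLevel c N z) {B : ℝ}
    (hB : 1 + Real.log N ≤ B * z) :
    |(#((Icc 1 N).filter fun n : ℕ ↦ CubeFree n ∧ CubeFree ⌊(n : ℝ) ^ c⌋₊) : ℝ) - N / zeta3 ^ 2| ≤
      (43 + 8 * B + (6 + 8 * B) / (c - 1)) * (N / z) := by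
  have hdiv : ((N / z : ℕ) : ℝ) ≤ N / z := Nat.cast_div_le
  have hsplit : (#((Icc 1 N).filter fun n : ℕ ↦ CubeFree n ∧ CubeFree ⌊(n : ℝ) ^ c⌋₊) : ℝ) =
      ∑ n ∈ Ioc 0 (N / z), cubeFreeIndicator n * cubeFreeIndicator ⌊(n : ℝ) ^ c⌋₊ +
        ∑ n ∈ Ioc (N / z) N, cubeFreeIndicator n * cubeFreeIndicator ⌊(n : ℝ) ^ c⌋₊ := by
    rw [card_filter_cubeFree_eq_sum, sum_Ioc_consecutive _ (Nat.zero_le _) (Nat.div_le_self _ _)]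
    rfl
  have hinitial : |∑ n ∈ Ioc 0 (N / z), cubeFreeIndicator n * cubeFreeIndicator ⌊(n : ℝ) ^ c⌋₊| ≤
      N / z := by
    calc _ ≤ ∑ _n ∈ Ioc 0 (N / z), (1 : ℝ) := by
          refine (abs_sum_le_sum_abs _ _).trans (sum_le_sum fun n _ ↦ ?_)
          rw [abs_mul]
          exact mul_le_one₀ (abs_cubeFreeIndicator_le_one n) (abs_nonneg _)
            (abs_cubeFreeIndicator_le_one _)
      _ = (N / z : ℕ) := by rw [sum_const, Nat.card_Ioc, tsub_zero, nsmul_one]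
      _ ≤ N / z := hdiv
  have hsieve := h.abs_sum_cubeFreeIndicator_sub_sum_cubeSieve_le hB
  have hmain := h.abs_sum_cubeSieve_sub_le
  have hdensity := abs_mul_cubeFreeDensity_sq_sub_le h.pos (Nat.cast_nonneg _) hdiv
  rw [hsplit]
  rw [abs_le] at hinitial hsieve hmain hdensity ⊢
  have hring : (43 + 8 * B + (6 + 8 * B) / (c - 1)) * (N / z : ℝ) =
      N / z + (11 + 8 * B + 8 * B / (c - 1)) * (N / z) + (17 + 6 / (c - 1)) * (N / z) +
        14 * (N / z) := by ring
  constructor <;> linarith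

end SieveLevel

end CubeFreeCount

section ErrorTerm

lemma sieveLevel_floor_rpow {c : ℝ} (hc₁ : 1 < c) (hc₂ : c < 2) {N : ℕ} (hN : 1 ≤ N) :
    SieveLevel c N ⌊(N : ℝ) ^ ((2 - c) / 34)⌋₊ where
  one_lt := hc₁
  lt_two := hc₂
  pos := Nat.floor_pos.2 (Real.one_le_rpow (mod_cast hN) (by linarith))
  pow_le := by
    calc _ ≤ ((N : ℝ) ^ ((2 - c) / 34)) ^ 34 := by
          gcongr
          exact Nat.floor_le (by positivity)
      _ = (N : ℝ) ^ (2 - c) := by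
          rw [← Real.rpow_mul_natCast N.cast_nonneg]
          norm_num

lemma le_two_mul_floor {t : ℝ} (ht : 1 ≤ t) : t ≤ 2 * ⌊t⌋₊ := by
  have hone : (1 : ℝ) ≤ ⌊t⌋₊ := mod_cast Nat.floor_pos.2 ht
  linarith [Nat.lt_floor_add_one t]

lemma one_add_log_le_mul_floor_rpow {η : ℝ} (hη : 0 < η) {t : ℝ} (ht : 1 ≤ t) :
    1 + Real.log t ≤ 2 * (1 + 1 / η) * ⌊t ^ η⌋₊ := by
  have hpow := Real.one_le_rpow ht hη.le
  calc 1 + Real.log t ≤ t ^ η + t ^ η / η := by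
        gcongr
        exact Real.log_le_rpow_div (by linarith) hη
    _ = (1 + 1 / η) * t ^ η := by ring
    _ ≤ (1 + 1 / η) * (2 * ⌊t ^ η⌋₊) := by
        gcongr
        exact le_two_mul_floor hpow
    _ = _ := by ring

lemma div_floor_rpow_le {η t : ℝ} (hη : 0 ≤ η) (ht : 1 ≤ t) :
    t / ⌊t ^ η⌋₊ ≤ 2 * t ^ (1 - η) := by
  have hpow := Real.one_le_rpow ht hη
  have hfloor : (0 : ℝ) < ⌊t ^ η⌋₊ := mod_cast Nat.floor_pos.2 hpow
  rw [div_le_iff₀ hfloor]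
  calc t = t ^ (1 - η) * t ^ η := by
        rw [← Real.rpow_add (by linarith), sub_add_cancel, Real.rpow_one]
    _ ≤ t ^ (1 - η) * (2 * ⌊t ^ η⌋₊) := by
        gcongr
        exact le_two_mul_floor hpow
    _ = _ := by ring

lemma abs_floor_div_zeta3_sq_sub_le {x : ℝ} (hx : 0 ≤ x) :
    |(⌊x⌋₊ : ℝ) / zeta3 ^ 2 - x / zeta3 ^ 2| ≤ 4 := by
  have hfloor : |(⌊x⌋₊ : ℝ) - x| ≤ 1 := by
    rw [abs_le]
    constructor <;> linarith [Nat.floor_le hx, Nat.lt_floor_add_one x]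
  calc _ = |(⌊x⌋₊ : ℝ) - x| * |1 / zeta3| ^ 2 := by
        rw [← abs_pow, ← abs_mul]
        ring_nf
    _ ≤ 1 * 2 ^ 2 := by
        gcongr
        exact abs_one_div_zeta3_le_two
    _ = 4 := by norm_num

theorem cubefree_floor_count_cubefree_general (c ε : ℝ) (hc1 : 1 < c) (hc2 : c < 2)
    (hε : ε ≤ (2 - c) / 34) :
    (fun x : ℝ =>
      (((Finset.Icc 1 ⌊x⌋₊).filter
          (fun n => CubeFree n ∧ CubeFree ⌊(n : ℝ) ^ c⌋₊)).card : ℝ)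
        - x / zeta3 ^ 2)
      =O[atTop] fun x : ℝ => x ^ (1 - ε) := by
  set η := (2 - c) / 34 with hη
  have hη₀ : 0 < η := by linarith
  set B := 2 * (1 + 1 / η)
  set C := 43 + 8 * B + (6 + 8 * B) / (c - 1)
  refine .of_bound (2 * C + 4) ?_
  filter_upwards [eventually_ge_atTop 1] with x hx
  have hfloor : 1 ≤ ⌊x⌋₊ := Nat.floor_pos.2 hx
  have hN : (1 : ℝ) ≤ ⌊x⌋₊ := mod_cast hfloor
  have hcount := (sieveLevel_floor_rpow hc1 hc2 hfloor).abs_card_cubeFree_floor_rpow_sub_le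
    (one_add_log_le_mul_floor_rpow hη₀ hN)
  have hfactor : (⌊x⌋₊ : ℝ) ^ (1 - η) ≤ x ^ (1 - η) :=
    Real.rpow_le_rpow (Nat.cast_nonneg _) (Nat.floor_le (by linarith)) (by linarith)
  have hone : 1 ≤ x ^ (1 - η) := Real.one_le_rpow hx (by linarith)
  rw [Real.norm_eq_abs, Real.norm_of_nonneg (by positivity)]
  calc _ ≤ C * (⌊x⌋₊ / ⌊(⌊x⌋₊ : ℝ) ^ η⌋₊) + 4 :=
        (abs_sub_le _ _ _).trans (add_le_add hcount (abs_floor_div_zeta3_sq_sub_le (by linarith)))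
    _ ≤ C * (2 * x ^ (1 - η)) + 4 * x ^ (1 - η) := by
        gcongr
        · exact (div_floor_rpow_le hη₀.le hN).trans (by gcongr)
        · linarith
    _ = (2 * C + 4) * x ^ (1 - η) := by ring
    _ ≤ (2 * C + 4) * x ^ (1 - ε) := by gcongr

end ErrorTerm

theorem cubefree_floor_count_cubefree (c ε : ℝ) (hc1 : 1 < c) (hc2 : c < 11 / 6)
    (hε1 : 0 < ε) (hε2 : ε < 1 / 10 ^ 10) :
    (fun x : ℝ =>
        (((Finset.Icc 1 ⌊x⌋₊).filter
            (fun n => CubeFree n ∧ CubeFree ⌊(n : ℝ) ^ c⌋₊)).card : ℝ)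
          - x / zeta3 ^ 2)
      =O[atTop] fun x : ℝ => x ^ (1 - ε) :=
  cubefree_floor_count_cubefree_general c ε hc1 (by linarith) (by linarith)
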